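/- Suppose that P is proper (every closed bounded subset of P is compact) and that Ω ⊆ P is open. Assume that ‖·‖_X is absolutely continuous and that ‖χ_E‖_X < ∞ for every measurable E ⊆ P with μ(E) < ∞. If locally Lipschitz functions are dense in N¹X, then the closure in the quasi-seminorm ‖·‖_{N¹X} of the set of Lipschitz functions with compact support contained in Ω equals {u ∈ N¹X : u = 0 on P ∖ Ω}. -/

import Mathlib

/-!
*Limits vanish outside `Ω`.* Let `f n ∈ Lip_c(Ω)` converge to `u` so rapidly that `∑ |u - f n|` and
`∑ g n` have finite quasi-norm, where `g n` is an upper gradient of `u - f n`. Where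
`∑ |u - f n| < ∞`, the value of `u` is finite, and it is zero outside `Ω`. The remaining set `N` is
null, and a curve meeting its complement with `∫_γ ∑ g n < ∞` avoids it altogether. Hence
`∑ g n + ∞ · χ_N` is an upper gradient of `u - χ_Ω u`, whose norm is as small as desired
(`QBFL.newt_sub_indicator_eq_zero`).

*Functions vanishing outside `Ω` are limits.* Truncation at levels `±n`
(`QBFL.memClosureLipc_of_eq_zero`), cutoffs of large balls (`QBFL.memClosureLipc_of_bounded`) and
removal of the values below a threshold `e` (`QBFL.memClosureLipc_of_isCompact_of_bounded`) reduce
the claim to the soft-thresholded function `q = b - max (-e) (min e b)`, with `b` bounded, of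
bounded support and zero outside `Ω`. In each step the error has a gradient concentrated on sets
decreasing to a null set, so that absolute continuity of the quasi-norm makes it small; this uses
locality of gradients of truncations (`QBFL.grad_clamp_le`) and the product rule
(`QBFL.grad_mul_le`).

The core is `QBFL.exists_isCompact_subset_support`. Let `f` be a locally Lipschitz function of
bounded support close to `b`. Were `|b - f| ≤ e / 3` everywhere, `q` would vanish off the compact
set `{|f| ≥ 2 * e / 3} ⊆ Ω`. In general there is a function `0 ≤ w ≤ 1`, small in `N¹X` and equal to
`1` off a *closed* set `F` on which `|b - f| ≤ e / 3`. Then `(1 - w) q` is close to `q` and vanishes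
off the compact set `F ∩ {|f| ≥ 2 * e / 3} ⊆ Ω`, whence multiplying locally Lipschitz approximants
by a cutoff of this compact set finishes the argument (`QBFL.memClosureLipc_of_isCompact`).

The function `w` comes from `QBFL.exists_isClosed_mul_abs_le_one`. Majorize a multiple `z` of
`b - f` and an upper gradient of `z` by lower semicontinuous functions `h` and `ρ` of comparable
norm (`QBFL.exists_isLscMajorant`, a Vitali–Carathéodory theorem in `X`), and let `w` be the minimum
of `1` and `pathInf h ρ`, where `pathInf h ρ x` is the infimum of `h(y) + ∫_γ ρ ds` over all curves
`γ` from `x` to some `y`. By construction `ρ` is an upper gradient of `w` and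
`|z| ≤ pathInf h ρ ≤ h`. As `P` is proper, near-optimal curves subconverge by Arzelà–Ascoli, so that
`pathInf h ρ` is lower semicontinuous (`lowerSemicontinuous_pathInf`) and `F = {pathInf h ρ ≤ 1}` is
closed.
-/

open MeasureTheory Filter Set Topology Metric ENNReal
open scoped NNReal

noncomputable section

/-- A (non-constant, rectifiable) curve in `P`, parametrized by arc length. -/
structure Curve (P : Type*) [PseudoMetricSpace P] where
  len : ℝ
  len_pos : 0 < len
  toFun : ℝ → P
  lip : LipschitzOnWith 1 toFun (Set.Icc 0 len)

variable {P : Type*}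

/-- The curve integral `∫_γ ρ ds`. -/
def curveLint [PseudoMetricSpace P] (γ : Curve P) (ρ : P → ℝ≥0∞) : ℝ≥0∞ :=
  ∫⁻ t in Set.Icc (0 : ℝ) γ.len, ρ (γ.toFun t)

/-- `g` is an upper gradient of `u`. -/
def IsUpperGradient [PseudoMetricSpace P] [MeasurableSpace P]
    (u : P → EReal) (g : P → ℝ≥0∞) : Prop :=
  Measurable g ∧
    ∀ γ : Curve P, (u (γ.toFun 0) - u (γ.toFun γ.len)).abs ≤ curveLint γ g

/-- A quasi-Banach function lattice over `(P, μ)` with continuous quasi-norm. -/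
structure QBFL (P : Type*) [MeasurableSpace P] (μ : MeasureTheory.Measure P) where
  nrm : (P → EReal) → ℝ≥0∞
  cc : ℝ≥0∞
  one_le_cc : 1 ≤ cc
  cc_lt_top : cc < ⊤
  nrm_eq_zero_iff : ∀ u : P → EReal, Measurable u → (nrm u = 0 ↔ u =ᵐ[μ] 0)
  nrm_smul : ∀ (a : ℝ) (u : P → EReal),
    nrm (fun x => (a : EReal) * u x) = ENNReal.ofReal |a| * nrm u
  nrm_triangle : ∀ u v : P → EReal,
    nrm (fun x => u x + v x) ≤ cc * (nrm u + nrm v)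
  nrm_mono : ∀ u v : P → EReal, (∀ᵐ x ∂μ, (u x).abs ≤ (v x).abs) → nrm u ≤ nrm v
  nrm_rieszFischer : ∀ f : ℕ → P → EReal, (∀ n, ∀ᵐ x ∂μ, 0 ≤ f n x) →
    nrm (fun x => ∑' n, f n x) ≤ ∑' n, cc ^ (n + 1) * nrm (f n)
  nrm_continuous : ∀ (f : ℕ → P → EReal) (u : P → EReal),
    Tendsto (fun n => nrm fun x => f n x - u x) atTop (𝓝 0) →
    Tendsto (fun n => nrm (f n)) atTop (𝓝 (nrm u))

variable [MetricSpace P] [MeasurableSpace P] {μ : MeasureTheory.Measure P}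

/-- The quasi-norm applied to a `ℝ≥0∞`-valued function. -/
def QBFL.nrmE (X : QBFL P μ) (g : P → ℝ≥0∞) : ℝ≥0∞ :=
  X.nrm fun x => (g x : EReal)

/-- The Newtonian quasi-seminorm `‖u‖_{N¹X}`. -/
def QBFL.newt (X : QBFL P μ) (u : P → EReal) : ℝ≥0∞ :=
  X.nrm u + ⨅ g ∈ {g : P → ℝ≥0∞ | IsUpperGradient u g}, X.nrmE g

/-- Membership in the Newtonian space `N¹X`. -/
def QBFL.memN1 (X : QBFL P μ) (u : P → EReal) : Prop :=
  Measurable u ∧ X.newt u < ⊤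

/-- The Sobolev capacity `C_X`. -/
def QBFL.cap (X : QBFL P μ) (E : Set P) : ℝ≥0∞ :=
  ⨅ u ∈ {u : P → EReal | X.memN1 u ∧ ∀ x ∈ E, 1 ≤ u x}, X.newt u


/-- `‖·‖_X` is absolutely continuous. -/
def QBFL.HasACNorm (X : QBFL P μ) : Prop :=
  ∀ u : P → EReal, Measurable u → X.nrm u < ⊤ →
    ∀ E : ℕ → Set P, (∀ n, MeasurableSet (E n)) → Antitone E → μ (⋂ n, E n) = 0 →
      Tendsto (fun n => X.nrm ((E n).indicator u)) atTop (𝓝 0)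

/-! ### Absolute values of extended reals -/

section EReal

lemma ereal_abs_coe (x : ℝ) : (x : EReal).abs = ‖x‖ₑ := by
  rw [EReal.abs_def, Real.enorm_eq_ofReal_abs]

lemma ereal_abs_coe_sub_coe (x y : ℝ) : ((x : EReal) - y).abs = ‖x - y‖ₑ := by
  rw [← EReal.coe_sub, ereal_abs_coe]

lemma ereal_abs_coe_ennreal (a : ℝ≥0∞) : (a : EReal).abs = a := by
  induction a with
  | top => rfl
  | coe a =>
    change ((a : ℝ) : EReal).abs = _
    rw [EReal.abs_def, abs_of_nonneg a.coe_nonneg, ENNReal.ofReal_coe_nnreal]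

lemma measurable_ereal_abs : Measurable EReal.abs := by
  refine EReal.measurable_of_measurable_real ?_
  simp only [ereal_abs_coe]
  fun_prop

lemma exists_coe_of_ereal_abs_sub_ne_top {a b : EReal} (h : (a - b).abs ≠ ⊤) :
    ∃ p q : ℝ, a = p ∧ b = q := by
  induction a <;> induction b <;> simp_all

lemma ereal_abs_sub_comm (a b : EReal) : (a - b).abs = (b - a).abs := by
  induction a <;> induction b <;> simp [ereal_abs_coe_sub_coe, enorm_sub_rev]

lemma ereal_abs_sub_le (a b c : EReal) : (a - c).abs ≤ (a - b).abs + (b - c).abs := by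
  by_cases hab : (a - b).abs = ⊤
  · simp [hab]
  by_cases hbc : (b - c).abs = ⊤
  · simp [hbc]
  obtain ⟨p, q, rfl, rfl⟩ := exists_coe_of_ereal_abs_sub_ne_top hab
  obtain ⟨_, r, _, rfl⟩ := exists_coe_of_ereal_abs_sub_ne_top hbc
  simpa only [ereal_abs_coe_sub_coe, sub_add_sub_cancel] using enorm_add_le (p - q) (q - r)

lemma ereal_abs_le_add_abs_sub (a b : EReal) : b.abs ≤ a.abs + (a - b).abs := by
  simpa [ereal_abs_sub_comm a, add_comm] using ereal_abs_sub_le b a 0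

lemma exists_coe_of_ereal_abs_sub_sub_sub_ne_top {a b a' b' : EReal}
    (h : ((a - b) - (a' - b')).abs ≠ ⊤) :
    ∃ p q p' q' : ℝ, a = p ∧ b = q ∧ a' = p' ∧ b' = q' := by
  obtain ⟨s, s', hs, hs'⟩ := exists_coe_of_ereal_abs_sub_ne_top h
  obtain ⟨p, q, hp, hq⟩ := exists_coe_of_ereal_abs_sub_ne_top (a := a) (b := b)
    (by rw [hs]; exact (EReal.abs_coe_lt_top s).ne)
  obtain ⟨p', q', hp', hq'⟩ := exists_coe_of_ereal_abs_sub_ne_top (a := a') (b := b')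
    (by rw [hs']; exact (EReal.abs_coe_lt_top s').ne)
  exact ⟨p, q, p', q', hp, hq, hp', hq'⟩

lemma ereal_abs_sub_sub_sub_le (a b c a' b' c' : EReal) :
    ((a - c) - (a' - c')).abs ≤ ((a - b) - (a' - b')).abs + ((b - c) - (b' - c')).abs := by
  by_cases hab : ((a - b) - (a' - b')).abs = ⊤
  · simp [hab]
  by_cases hbc : ((b - c) - (b' - c')).abs = ⊤
  · simp [hbc]
  obtain ⟨p, q, p', q', rfl, rfl, rfl, rfl⟩ := exists_coe_of_ereal_abs_sub_sub_sub_ne_top hab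
  obtain ⟨_, r, _, r', _, rfl, _, rfl⟩ := exists_coe_of_ereal_abs_sub_sub_sub_ne_top hbc
  simp only [← EReal.coe_sub, ereal_abs_coe]
  refine le_of_eq_of_le (congrArg _ ?_) (enorm_add_le _ _)
  ring

lemma ereal_abs_sub_le_add_sub_sub_sub (a b a' b' : EReal) :
    (b - b').abs ≤ (a - a').abs + ((a - b) - (a' - b')).abs := by
  by_cases hab : ((a - b) - (a' - b')).abs = ⊤
  · simp [hab]
  obtain ⟨p, q, p', q', rfl, rfl, rfl, rfl⟩ := exists_coe_of_ereal_abs_sub_sub_sub_ne_top hab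
  simp only [← EReal.coe_sub, ereal_abs_coe]
  refine le_of_eq_of_le (congrArg _ ?_) (enorm_sub_le (a := p - p'))
  ring

end EReal

/-! ### The quasi-norm of nonnegative functions -/

namespace QBFL

variable {α : Type*} [MeasurableSpace α] {ν : Measure α} (X : QBFL α ν)

lemma nrmE_mono_ae {f g : α → ℝ≥0∞} (h : ∀ᵐ x ∂ν, f x ≤ g x) : X.nrmE f ≤ X.nrmE g :=
  X.nrm_mono _ _ (by simpa only [ereal_abs_coe_ennreal] using h)

lemma nrmE_mono {f g : α → ℝ≥0∞} (h : ∀ x, f x ≤ g x) : X.nrmE f ≤ X.nrmE g :=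
  X.nrmE_mono_ae (Eventually.of_forall h)

lemma nrm_eq_nrmE_abs (u : α → EReal) : X.nrm u = X.nrmE fun x => (u x).abs := by
  apply le_antisymm <;> exact X.nrm_mono _ _ (by simp [ereal_abs_coe_ennreal])

lemma nrmE_indicator_one (A : Set α) : X.nrmE (A.indicator 1) = X.nrm (A.indicator 1) := by
  refine congrArg X.nrm (funext fun x => ?_)
  by_cases hx : x ∈ A <;> simp [hx]

lemma cc_ne_top : X.cc ≠ ⊤ := X.cc_lt_top.ne

lemma cc_ne_zero : X.cc ≠ 0 := (one_pos.trans_le X.one_le_cc).ne'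

lemma nrmE_add_le (f g : α → ℝ≥0∞) :
    X.nrmE (fun x => f x + g x) ≤ X.cc * (X.nrmE f + X.nrmE g) := by
  simpa only [nrmE, EReal.coe_ennreal_add] using X.nrm_triangle _ _

lemma nrmE_const_mul (a : ℝ≥0) (f : α → ℝ≥0∞) : X.nrmE (fun x => a * f x) = a * X.nrmE f := by
  have h := X.nrm_smul (a : ℝ) (fun x => (f x : EReal))
  rw [abs_of_nonneg a.coe_nonneg, ENNReal.ofReal_coe_nnreal] at h
  rw [nrmE, nrmE, ← h]
  simp only [EReal.coe_ennreal_mul]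
  rfl

lemma exists_pos_cc_mul_add_lt {ε : ℝ≥0∞} (hε : 0 < ε) :
    ∃ δ : ℝ≥0, 0 < δ ∧ X.cc * (δ + δ) < ε := by
  obtain ⟨δ, hδ, h⟩ := ENNReal.exists_nnreal_pos_mul_lt
    (ENNReal.mul_ne_top X.cc_ne_top ENNReal.ofNat_ne_top (b := 2)) hε.ne'
  exact ⟨δ, hδ, by rwa [← two_mul, ← mul_assoc, mul_comm]⟩

lemma nrmE_eq_zero_iff {f : α → ℝ≥0∞} (hf : Measurable f) : X.nrmE f = 0 ↔ f =ᵐ[ν] 0 := by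
  refine (X.nrm_eq_zero_iff _ (measurable_coe_ennreal_ereal.comp hf)).trans ?_
  simp [Filter.EventuallyEq]

lemma nrmE_zero : X.nrmE (fun _ => 0) = 0 :=
  (X.nrmE_eq_zero_iff measurable_const).2 EventuallyEq.rfl

lemma nrmE_tsum_le (f : ℕ → α → ℝ≥0∞) :
    X.nrmE (fun x => ∑' n, f n x) ≤ ∑' n, X.cc ^ (n + 1) * X.nrmE (f n) := by
  refine le_of_eq_of_le (congrArg X.nrm (funext fun x => ?_))
    (X.nrm_rieszFischer (fun n x => (f n x : EReal))
      fun n => Eventually.of_forall fun x => EReal.coe_ennreal_nonneg _)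
  let coeHom : ℝ≥0∞ →+ EReal :=
    { toFun := (↑), map_zero' := EReal.coe_ennreal_zero, map_add' := EReal.coe_ennreal_add }
  exact (ENNReal.summable.hasSum.map coeHom continuous_coe_ennreal_ereal).tsum_eq.symm

lemma ae_lt_top_of_nrmE_lt_top {f : α → ℝ≥0∞} (hf : Measurable f) (h : X.nrmE f < ⊤) :
    ∀ᵐ x ∂ν, f x < ⊤ := by
  set χ : α → ℝ≥0∞ := (f ⁻¹' {⊤}).indicator 1 with hχ
  have hle (n : ℕ) : n * X.nrmE χ ≤ X.nrmE f := by
    rw [← ENNReal.coe_natCast, ← X.nrmE_const_mul]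
    refine X.nrmE_mono fun x => ?_
    by_cases hx : f x = ⊤ <;> simp [hχ, hx]
  have h0 : X.nrmE χ = 0 := by
    by_contra h0
    obtain ⟨n, hn⟩ := ENNReal.exists_nat_mul_gt h0 h.ne
    exact hn.not_ge (hle n)
  rw [X.nrmE_eq_zero_iff (measurable_one.indicator (hf (measurableSet_singleton ⊤)))] at h0
  filter_upwards [h0] with x hx
  by_contra! hx'
  simp [top_le_iff.1 hx'] at hx

lemma exists_pos_weights {ε : ℝ≥0∞} (hε : ε ≠ 0) :
    ∃ d : ℕ → ℝ≥0, (∀ n, 0 < d n) ∧ ∑' n, X.cc ^ (n + 1) * d n < ε := by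
  obtain ⟨ε', hε', hsum⟩ := ENNReal.exists_pos_sum_of_countable hε ℕ
  have (n : ℕ) : ∃ d > 0, (d : ℝ≥0) * X.cc ^ (n + 1) < ε' n :=
    ENNReal.exists_nnreal_pos_mul_lt (ENNReal.pow_ne_top X.cc_ne_top)
      (ENNReal.coe_ne_zero.2 (hε' n).ne')
  choose d hd hlt using this
  refine ⟨d, hd, (ENNReal.tsum_le_tsum fun n => ?_).trans_lt hsum⟩
  rw [mul_comm]
  exact (hlt n).le

lemma tendsto_nrmE_indicator (hAC : X.HasACNorm) {g : α → ℝ≥0∞} (hg : Measurable g)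
    (hfin : X.nrmE g < ⊤) {E : ℕ → Set α} (hE : ∀ n, MeasurableSet (E n)) (hanti : Antitone E)
    (h0 : ν (⋂ n, E n) = 0) :
    Tendsto (fun n => X.nrmE ((E n).indicator g)) atTop (𝓝 0) := by
  refine (hAC _ (measurable_coe_ennreal_ereal.comp hg) hfin E hE hanti h0).congr fun n =>
    congrArg X.nrm (funext fun x => ?_)
  by_cases hx : x ∈ E n <;> simp [hx]

/-- If the claim failed, a sequence of bad sets with summable characteristic functions would, as
in the Borel–Cantelli lemma, have tails decreasing to a null set. -/
lemma exists_forall_nrmE_indicator_lt (hAC : X.HasACNorm) {g : α → ℝ≥0∞} (hg : Measurable g)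
    (hfin : X.nrmE g < ⊤) {ε : ℝ≥0∞} (hε : 0 < ε) :
    ∃ δ : ℝ≥0, 0 < δ ∧ ∀ A : Set α, MeasurableSet A → X.nrmE (A.indicator 1) ≤ δ →
      X.nrmE (A.indicator g) < ε := by
  by_contra! hbad
  obtain ⟨d, hd, hsum⟩ := X.exists_pos_weights one_ne_zero
  choose A hA hAd hAε using fun n => hbad (d n) (hd n)
  set tail : ℕ → Set α := fun m => ⋃ n ≥ m, A n
  have htail_meas (m : ℕ) : MeasurableSet (tail m) :=
    MeasurableSet.iUnion fun n => MeasurableSet.iUnion fun _ => hA n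
  have htail_anti : Antitone tail := fun m m' h =>
    biUnion_subset_biUnion_left fun n (hn : m' ≤ n) => h.trans hn
  have hχ : X.nrmE (fun x => ∑' n, (A n).indicator 1 x) < ⊤ :=
    calc _ ≤ ∑' n, X.cc ^ (n + 1) * X.nrmE ((A n).indicator 1) := X.nrmE_tsum_le _
      _ ≤ ∑' n, X.cc ^ (n + 1) * d n := ENNReal.tsum_le_tsum fun n => by gcongr; exact hAd n
      _ < ⊤ := hsum.trans one_lt_top
  have hnull : ν (⋂ m, tail m) = 0 := by
    have hae := X.ae_lt_top_of_nrmE_lt_top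
      (Measurable.tsum fun n => measurable_one.indicator (hA n)) hχ
    refine measure_mono_null (fun x hx => ?_) (ae_iff.1 hae)
    intro hlt
    have hx_fin := ENNReal.finite_const_le_of_tsum_ne_top hlt.ne one_ne_zero
    obtain ⟨m, hm⟩ := hx_fin.bddAbove
    obtain ⟨n, hn, hxn⟩ := mem_iUnion₂.1 (mem_iInter.1 hx (m + 1))
    have hnm : n ≤ m := hm (a := n) (by simp [hxn])
    omega
  obtain ⟨n, hn⟩ := ((X.tendsto_nrmE_indicator hAC hg hfin htail_meas htail_anti hnull).eventually
    (gt_mem_nhds hε)).exists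
  refine ((hAε n).trans (X.nrmE_mono fun x => ?_)).not_gt hn
  exact indicator_le_indicator_of_subset (subset_biUnion_of_mem (u := A) (le_refl n))
    (fun _ => zero_le) x

lemma mul_nrmE_indicator_lt_le (σ : ℝ≥0) (f : α → ℝ≥0∞) :
    σ * X.nrmE ({x | σ < f x}.indicator 1) ≤ X.nrmE f := by
  rw [← X.nrmE_const_mul]
  refine X.nrmE_mono fun x => ?_
  by_cases hx : σ < f x
  · simpa [hx] using hx.le
  · simp [hx]

lemma exists_forall_nrmE_mul_lt (hAC : X.HasACNorm) {g : α → ℝ≥0∞} (hg : Measurable g)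
    (hfin : X.nrmE g < ⊤) {ε : ℝ≥0∞} (hε : 0 < ε) :
    ∃ δ : ℝ≥0, 0 < δ ∧ ∀ f : α → ℝ≥0∞, Measurable f → (∀ x, f x ≤ 1) → X.nrmE f ≤ δ →
      X.nrmE (fun x => f x * g x) < ε := by
  obtain ⟨ε', hε', hlt⟩ := X.exists_pos_cc_mul_add_lt hε
  obtain ⟨δ, hδ, hδg⟩ := X.exists_forall_nrmE_indicator_lt hAC hg hfin (ENNReal.coe_pos.2 hε')
  obtain ⟨σ, hσ, hσg⟩ := ENNReal.exists_nnreal_pos_mul_lt hfin.ne (ENNReal.coe_ne_zero.2 hε'.ne')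
  refine ⟨σ * δ, mul_pos hσ hδ, fun f hf hf1 hfδ => ?_⟩
  have hA : X.nrmE ({x | σ < f x}.indicator 1) ≤ δ := by
    rw [← ENNReal.mul_le_mul_iff_right (ENNReal.coe_ne_zero.2 hσ.ne') ENNReal.coe_ne_top]
    exact (X.mul_nrmE_indicator_lt_le σ f).trans (by rwa [← ENNReal.coe_mul])
  calc X.nrmE (fun x => f x * g x)
      ≤ X.nrmE fun x => σ * g x + {x | σ < f x}.indicator g x := by
        refine X.nrmE_mono fun x => ?_
        by_cases hx : σ < f x
        · simpa [hx] using le_add_left (mul_le_of_le_one_left' (hf1 x))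
        · simpa [hx] using by gcongr; exact not_lt.1 hx
    _ ≤ X.cc * (σ * X.nrmE g + X.nrmE ({x | σ < f x}.indicator g)) := by
        rw [← X.nrmE_const_mul]
        exact X.nrmE_add_le _ _
    _ ≤ X.cc * (ε' + ε') := by
        gcongr
        exact (hδg _ (measurableSet_lt measurable_const hf) hA).le
    _ < ε := hlt

end QBFL

/-! ### Integrals over intervals -/

section Interval

lemma setLIntegral_Icc_add_adjacent (F : ℝ → ℝ≥0∞) {a b c : ℝ} (hab : a ≤ b) (hbc : b ≤ c) :
    (∫⁻ t in Icc a b, F t) + ∫⁻ t in Icc b c, F t = ∫⁻ t in Icc a c, F t := by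
  simp only [← restrict_Ioc_eq_restrict_Icc]
  rw [← lintegral_union measurableSet_Ioc (Ioc_disjoint_Ioc_of_le le_rfl),
    Ioc_union_Ioc_eq_Ioc hab hbc]

lemma setLIntegral_Icc_le_of_le (F : ℝ → ℝ≥0∞) {a b s t : ℝ} (has : a ≤ s) (htb : t ≤ b) :
    ∫⁻ r in Icc s t, F r ≤ ∫⁻ r in Icc a b, F r :=
  lintegral_mono_set (Icc_subset_Icc has htb)

lemma setLIntegral_Icc_comp_add_right (F : ℝ → ℝ≥0∞) (a b d : ℝ) :
    ∫⁻ t in Icc a b, F (t + d) = ∫⁻ t in Icc (a + d) (b + d), F t := by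
  simpa using (measurePreserving_add_right volume d).setLIntegral_comp_emb
    (measurableEmbedding_addRight d) F (Icc a b)

lemma setLIntegral_Icc_comp_sub_left (F : ℝ → ℝ≥0∞) (a b d : ℝ) :
    ∫⁻ t in Icc a b, F (d - t) = ∫⁻ t in Icc (d - b) (d - a), F t := by
  simpa using (Measure.measurePreserving_sub_left volume d).setLIntegral_comp_emb
    (MeasurableEquiv.subLeft d).measurableEmbedding F (Icc a b)

lemma exists_forall_setLIntegral_Icc_lt {F : ℝ → ℝ≥0∞} {a b : ℝ}
    (h : ∫⁻ t in Icc a b, F t ≠ ⊤) {τ : ℝ≥0∞} (hτ : 0 < τ) :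
    ∃ δ > 0, ∀ s t : ℝ, a ≤ s → t ≤ b → t - s ≤ δ → ∫⁻ r in Icc s t, F r < τ := by
  obtain ⟨δ, hδ, hsmall⟩ := exists_pos_setLIntegral_lt_of_measure_lt h hτ.ne'
  obtain ⟨δ', hδ', hδ'δ⟩ := ENNReal.lt_iff_exists_nnreal_btwn.1 hδ
  refine ⟨δ', by exact_mod_cast hδ', fun s t has htb hst => ?_⟩
  have hvol : volume (Icc s t) < δ := by
    rw [Real.volume_Icc]
    exact ((ENNReal.ofReal_le_ofReal hst).trans_eq ENNReal.ofReal_coe_nnreal).trans_lt hδ'δ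
  have := hsmall (Icc s t) ((Measure.restrict_apply_le _ _).trans_lt hvol)
  rwa [Measure.restrict_restrict measurableSet_Icc,
    inter_eq_self_of_subset_left (Icc_subset_Icc has htb)] at this

lemma enorm_le_add_of_edist_le {x y : ℝ} {τ : ℝ≥0∞} (h : edist x y ≤ τ) : ‖x‖ₑ ≤ ‖y‖ₑ + τ := by
  rw [edist_eq_enorm_sub] at h
  calc ‖x‖ₑ = ‖y + (x - y)‖ₑ := by rw [add_sub_cancel]
    _ ≤ ‖y‖ₑ + τ := (enorm_add_le _ _).trans (by gcongr)

/-- `F` is an upper gradient of the function `φ` of one real variable on the interval `[a, b]`. -/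
def HasUpperGradientOnIcc {E : Type*} [PseudoEMetricSpace E] (φ : ℝ → E) (F : ℝ → ℝ≥0∞)
    (a b : ℝ) : Prop :=
  ∀ s t, a ≤ s → s ≤ t → t ≤ b → edist (φ s) (φ t) ≤ ∫⁻ r in Icc s t, F r

namespace HasUpperGradientOnIcc

lemma continuousOn {E : Type*} [PseudoEMetricSpace E] {φ : ℝ → E} {F : ℝ → ℝ≥0∞} {a b : ℝ}
    (h : HasUpperGradientOnIcc φ F a b) (hfin : ∫⁻ t in Icc a b, F t ≠ ⊤) :
    ContinuousOn φ (Icc a b) := by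
  intro t ht
  rw [ContinuousWithinAt, EMetric.tendsto_nhds]
  intro ε hε
  obtain ⟨δ, hδ, hsmall⟩ := exists_forall_setLIntegral_Icc_lt hfin hε
  filter_upwards [self_mem_nhdsWithin, mem_nhdsWithin_of_mem_nhds (ball_mem_nhds t hδ)]
    with s hs hst
  rw [mem_ball, Real.dist_eq, abs_lt] at hst
  rcases le_total s t with hle | hle
  · exact (h s t hs.1 hle ht.2).trans_lt (hsmall s t hs.1 ht.2 (by linarith))
  · rw [edist_comm]
    exact (h t s ht.1 hle hs.2).trans_lt (hsmall t s ht.1 hs.2 (by linarith))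

lemma edist_le_of_local {E : Type*} [PseudoEMetricSpace E] {φ : ℝ → E} {F : ℝ → ℝ≥0∞}
    {a b δ : ℝ} (hδ : 0 < δ) (hab : a ≤ b)
    (h : ∀ s t, a ≤ s → s ≤ t → t ≤ b → t - s ≤ δ → edist (φ s) (φ t) ≤ ∫⁻ r in Icc s t, F r) :
    edist (φ a) (φ b) ≤ ∫⁻ r in Icc a b, F r := by
  suffices H : ∀ n : ℕ, ∀ t, a ≤ t → t ≤ b → t - a ≤ n * δ →
      edist (φ a) (φ t) ≤ ∫⁻ r in Icc a t, F r by
    obtain ⟨n, hn⟩ := exists_nat_ge ((b - a) / δ)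
    exact H n b hab le_rfl ((div_le_iff₀ hδ).1 hn)
  intro n
  induction n with
  | zero =>
    intro t hat _ ht
    obtain rfl : t = a := le_antisymm (by simpa using ht) hat
    simp
  | succ n ih =>
    intro t hat htb ht
    have has : a ≤ max a (t - δ) := le_max_left _ _
    have hst : max a (t - δ) ≤ t := max_le hat (by linarith)
    have hs : max a (t - δ) - a ≤ n * δ := by
      push_cast at ht
      rw [sub_le_iff_le_add]
      exact max_le (by nlinarith [n.cast_nonneg (α := ℝ)]) (by linarith)
    rw [← setLIntegral_Icc_add_adjacent F has hst]
    exact (edist_triangle _ _ _).trans (add_le_add (ih _ has (hst.trans htb) hs)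
      (h _ _ has hst htb (by linarith [le_max_right a (t - δ)])))

lemma edist_mul_le {φ ψ : ℝ → ℝ} {F G : ℝ → ℝ≥0∞} {a b : ℝ} (hab : a ≤ b)
    (hφ : HasUpperGradientOnIcc φ F a b) (hψ : HasUpperGradientOnIcc ψ G a b)
    (hF : Measurable F) (hG : Measurable G) (hFfin : ∫⁻ t in Icc a b, F t ≠ ⊤)
    (hGfin : ∫⁻ t in Icc a b, G t ≠ ⊤) {τ : ℝ≥0∞} (hτ : 0 < τ) :
    edist (φ a * ψ a) (φ b * ψ b) ≤
      ∫⁻ r in Icc a b, (‖φ r‖ₑ * G r + ‖ψ r‖ₑ * F r + τ * (G r + F r)) := by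
  obtain ⟨δ₁, hδ₁, hsmallF⟩ := exists_forall_setLIntegral_Icc_lt hFfin hτ
  obtain ⟨δ₂, hδ₂, hsmallG⟩ := exists_forall_setLIntegral_Icc_lt hGfin hτ
  refine edist_le_of_local (φ := fun t => φ t * ψ t) (lt_min hδ₁ hδ₂) hab
    fun s t has hst htb hδ => ?_
  have hφ_osc : ∀ r ∈ Icc s t, ‖φ s‖ₑ ≤ ‖φ r‖ₑ + τ := fun r hr =>
    enorm_le_add_of_edist_le <| (hφ s r has hr.1 (hr.2.trans htb)).trans
      (hsmallF s r has (hr.2.trans htb) (by linarith [hr.2, min_le_left δ₁ δ₂])).le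
  have hψ_osc : ∀ r ∈ Icc s t, ‖ψ t‖ₑ ≤ ‖ψ r‖ₑ + τ := fun r hr => by
    refine enorm_le_add_of_edist_le ?_
    rw [edist_comm]
    exact (hψ r t (has.trans hr.1) hr.2 htb).trans
      (hsmallG r t (has.trans hr.1) htb (by linarith [hr.1, min_le_right δ₁ δ₂])).le
  calc edist (φ s * ψ s) (φ t * ψ t)
      = ‖φ s * (ψ s - ψ t) + ψ t * (φ s - φ t)‖ₑ := by rw [edist_eq_enorm_sub]; congr 1; ring
    _ ≤ ‖φ s‖ₑ * edist (ψ s) (ψ t) + ‖ψ t‖ₑ * edist (φ s) (φ t) := by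
        simp only [edist_eq_enorm_sub, ← enorm_mul]
        exact enorm_add_le _ _
    _ ≤ ‖φ s‖ₑ * (∫⁻ r in Icc s t, G r) + ‖ψ t‖ₑ * (∫⁻ r in Icc s t, F r) := by
        gcongr
        · exact hψ s t has hst htb
        · exact hφ s t has hst htb
    _ = ∫⁻ r in Icc s t, (‖φ s‖ₑ * G r + ‖ψ t‖ₑ * F r) := by
        rw [lintegral_add_left (hG.const_mul _), lintegral_const_mul _ hG,
          lintegral_const_mul _ hF]
    _ ≤ _ := setLIntegral_mono' measurableSet_Icc fun r hr => by
        calc _ ≤ (‖φ r‖ₑ + τ) * G r + (‖ψ r‖ₑ + τ) * F r := by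
              gcongr
              · exact hφ_osc r hr
              · exact hψ_osc r hr
          _ = _ := by ring

end HasUpperGradientOnIcc

lemma exists_Ioo_subset_preimage_Ioo_of_le {φ : ℝ → ℝ} {a b p q : ℝ} (hab : a ≤ b)
    (hφ : ContinuousOn φ (Icc a b)) (hpq : p < q) (ha : φ a ≤ p) (hb : q ≤ φ b) :
    ∃ s t, a ≤ s ∧ s < t ∧ t ≤ b ∧ φ s ≤ p ∧ q ≤ φ t ∧ ∀ r ∈ Ioo s t, φ r ∈ Ioo p q := by
  have hq : IsCompact (Icc a b ∩ φ ⁻¹' Ici q) :=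
    isCompact_Icc.of_isClosed_subset (hφ.preimage_isClosed_of_isClosed isClosed_Icc isClosed_Ici)
      inter_subset_left
  obtain ⟨t, ⟨ht, htq⟩, ht_min⟩ := hq.exists_isLeast ⟨b, ⟨hab, le_rfl⟩, hb⟩
  have hp : IsCompact (Icc a t ∩ φ ⁻¹' Iic p) :=
    isCompact_Icc.of_isClosed_subset ((hφ.mono (Icc_subset_Icc_right
      ht.2)).preimage_isClosed_of_isClosed isClosed_Icc isClosed_Iic) inter_subset_left
  obtain ⟨s, ⟨hs, hsp⟩, hs_max⟩ := hp.exists_isGreatest ⟨a, ⟨le_rfl, ht.1⟩, ha⟩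
  simp only [mem_preimage, mem_Ici, mem_Iic] at htq hsp
  refine ⟨s, t, hs.1, lt_of_le_of_ne hs.2 ?_, ht.2, hsp, htq, fun r hr => ⟨?_, ?_⟩⟩
  · rintro rfl
    linarith
  · by_contra! hr'
    exact hr.1.not_ge (hs_max ⟨⟨hs.1.trans hr.1.le, hr.2.le⟩, hr'⟩)
  · by_contra! hr'
    exact hr.2.not_ge (ht_min ⟨⟨hs.1.trans hr.1.le, hr.2.le.trans ht.2⟩, hr'⟩)

lemma exists_Ioo_subset_preimage_Ioo {φ : ℝ → ℝ} {a b p q : ℝ} (hab : a ≤ b)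
    (hφ : ContinuousOn φ (Icc a b)) (hpq : p < q)
    (h : (φ a ≤ p ∧ q ≤ φ b) ∨ (φ b ≤ p ∧ q ≤ φ a)) :
    ∃ s t, a ≤ s ∧ s < t ∧ t ≤ b ∧ q - p ≤ |φ s - φ t| ∧ ∀ r ∈ Ioo s t, φ r ∈ Ioo p q := by
  rcases h with ⟨ha, hb⟩ | ⟨hb, ha⟩
  · obtain ⟨s, t, has, hst, htb, hs, ht, hr⟩ :=
      exists_Ioo_subset_preimage_Ioo_of_le hab hφ hpq ha hb
    exact ⟨s, t, has, hst, htb, by rw [abs_sub_comm]; exact le_abs.2 (Or.inl (by linarith)), hr⟩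
  · obtain ⟨s, t, has, hst, htb, hs, ht, hr⟩ := exists_Ioo_subset_preimage_Ioo_of_le
      (φ := fun r => -φ r) hab hφ.neg (neg_lt_neg hpq) (neg_le_neg ha) (neg_le_neg hb)
    exact ⟨s, t, has, hst, htb, le_abs.2 (Or.inl (by linarith)), fun r h =>
      ⟨neg_lt_neg_iff.1 (hr r h).2, neg_lt_neg_iff.1 (hr r h).1⟩⟩

end Interval

/-! ### Calculus of upper gradients -/

section UpperGradient

variable {α : Type*} [PseudoMetricSpace α] [MeasurableSpace α]

lemma isUpperGradient_iff {u : α → EReal} {g : α → ℝ≥0∞} :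
    IsUpperGradient u g ↔ Measurable g ∧ ∀ c : ℝ → α, LipschitzWith 1 c → ∀ a b, a < b →
      (u (c a) - u (c b)).abs ≤ ∫⁻ t in Icc a b, g (c t) := by
  refine ⟨fun ⟨hg, h⟩ => ⟨hg, fun c hc a b hab => ?_⟩, fun ⟨hg, h⟩ => ⟨hg, fun γ => ?_⟩⟩
  · have hca : LipschitzWith 1 fun t : ℝ => c (t + a) := by
      simpa [Function.comp_def] using hc.comp (isometry_add_right a).lipschitz
    have := h ⟨b - a, sub_pos.2 hab, fun t => c (t + a), hca.lipschitzOnWith⟩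
    simpa only [curveLint, zero_add, sub_add_cancel,
      setLIntegral_Icc_comp_add_right fun t => g (c t)] using this
  · have h0 := γ.len_pos.le
    set c : ℝ → α := IccExtend h0 ((Icc 0 γ.len).domRestrict γ.toFun)
    have hc : LipschitzWith 1 c := by
      simpa [c, IccExtend] using γ.lip.to_restrict.comp (LipschitzWith.projIcc h0)
    have hcγ : ∀ t ∈ Icc 0 γ.len, c t = γ.toFun t := fun t ht => IccExtend_of_mem h0 _ ht
    rw [← hcγ 0 ⟨le_rfl, h0⟩, ← hcγ γ.len ⟨h0, le_rfl⟩]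
    refine (h c hc 0 γ.len γ.len_pos).trans_eq
      (setLIntegral_congr_fun measurableSet_Icc fun t ht => ?_)
    simp only [hcγ t ht]

namespace IsUpperGradient

lemma ereal_abs_sub_le {u : α → EReal} {g : α → ℝ≥0∞} (h : IsUpperGradient u g) {c : ℝ → α}
    (hc : LipschitzWith 1 c) {a b : ℝ} (hab : a < b) :
    (u (c a) - u (c b)).abs ≤ ∫⁻ t in Icc a b, g (c t) :=
  (isUpperGradient_iff.1 h).2 c hc a b hab

lemma of_abs_sub_le {u v : α → EReal} {g : α → ℝ≥0∞} (h : IsUpperGradient u g)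
    (hv : ∀ x y, (v x - v y).abs ≤ (u x - u y).abs) : IsUpperGradient v g :=
  ⟨h.1, fun _ => (hv _ _).trans (h.2 _)⟩

lemma const_of_lipschitzWith {f : α → ℝ} {K : ℝ≥0} (hf : LipschitzWith K f) :
    IsUpperGradient (fun x => (f x : EReal)) fun _ => K := by
  refine isUpperGradient_iff.2 ⟨measurable_const, fun c hc a b hab => ?_⟩
  rw [ereal_abs_coe_sub_coe, ← edist_eq_enorm_sub, setLIntegral_const, Real.volume_Icc,
    edist_comm]
  refine ((hf.comp hc) b a).trans_eq ?_
  rw [mul_one, edist_dist, Real.dist_eq, abs_of_pos (sub_pos.2 hab)]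

lemma exists_hasUpperGradientOnIcc {u : α → EReal} {g : α → ℝ≥0∞} (h : IsUpperGradient u g)
    {c : ℝ → α} (hc : LipschitzWith 1 c) {a b : ℝ} (hab : a < b)
    (hfin : ∫⁻ t in Icc a b, g (c t) ≠ ⊤) :
    ∃ φ : ℝ → ℝ, (∀ t ∈ Icc a b, u (c t) = φ t) ∧
      HasUpperGradientOnIcc φ (fun t => g (c t)) a b := by
  have hsub : ∀ s t, a ≤ s → s < t → t ≤ b →
      ∃ p q : ℝ, u (c s) = p ∧ u (c t) = q := fun s t has hst htb =>
    exists_coe_of_ereal_abs_sub_ne_top <| ne_top_of_le_ne_top hfin <|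
      (h.ereal_abs_sub_le hc hst).trans (setLIntegral_Icc_le_of_le _ has htb)
  have hreal : ∀ t ∈ Icc a b, u (c t) = ((u (c t)).toReal : EReal) := by
    intro t ht
    obtain ⟨p, hp⟩ : ∃ p : ℝ, u (c t) = p := by
      rcases ht.1.eq_or_lt with rfl | hat
      · obtain ⟨p, -, hp, -⟩ := hsub a b le_rfl hab le_rfl
        exact ⟨p, hp⟩
      · obtain ⟨-, p, -, hp⟩ := hsub a t le_rfl hat ht.2
        exact ⟨p, hp⟩
    rw [hp, EReal.toReal_coe]
  refine ⟨fun t => (u (c t)).toReal, hreal, fun s t has hst htb => ?_⟩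
  rcases hst.eq_or_lt with rfl | hst'
  · simp
  · have := h.ereal_abs_sub_le hc hst'
    rwa [hreal s ⟨has, hst.trans htb⟩, hreal t ⟨has.trans hst, htb⟩, ereal_abs_coe_sub_coe,
      ← edist_eq_enorm_sub] at this

section Borel

variable [BorelSpace α]

lemma measurable_comp {u : α → EReal} {g : α → ℝ≥0∞} (h : IsUpperGradient u g) {c : ℝ → α}
    (hc : LipschitzWith 1 c) : Measurable fun t => g (c t) :=
  h.1.comp hc.continuous.measurable

lemma add_of_abs_sub_le {u u₁ u₂ : α → EReal} {g₁ g₂ : α → ℝ≥0∞} (h₁ : IsUpperGradient u₁ g₁)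
    (h₂ : IsUpperGradient u₂ g₂)
    (hu : ∀ x y, (u x - u y).abs ≤ (u₁ x - u₁ y).abs + (u₂ x - u₂ y).abs) :
    IsUpperGradient u fun x => g₁ x + g₂ x := by
  refine isUpperGradient_iff.2 ⟨h₁.1.add h₂.1, fun c hc a b hab => ?_⟩
  rw [lintegral_add_left (h₁.measurable_comp hc)]
  exact (hu _ _).trans (add_le_add (h₁.ereal_abs_sub_le hc hab) (h₂.ereal_abs_sub_le hc hab))

/-- The product rule. The summands `τ * g` make the inequality trivial along curves of infinite
gradient integral, so that no exceptional family of curves is needed. -/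
lemma mul {η z : α → ℝ} {gη gz : α → ℝ≥0∞} (hη : Measurable η) (hz : Measurable z)
    (hgη : IsUpperGradient (fun x => (η x : EReal)) gη)
    (hgz : IsUpperGradient (fun x => (z x : EReal)) gz) {τ : ℝ≥0} (hτ : 0 < τ) :
    IsUpperGradient (fun x => ((η x * z x : ℝ) : EReal))
      fun x => ‖η x‖ₑ * gz x + ‖z x‖ₑ * gη x + τ * (gz x + gη x) := by
  have hmη := hgη.1
  have hmz := hgz.1
  refine isUpperGradient_iff.2 ⟨by fun_prop, fun c hc a b hab => ?_⟩
  have hτ' : (τ : ℝ≥0∞) ≠ 0 := ENNReal.coe_ne_zero.2 hτ.ne'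
  by_cases htop : (∫⁻ t in Icc a b, gz (c t)) = ⊤ ∨ (∫⁻ t in Icc a b, gη (c t)) = ⊤
  · refine le_top.trans_eq (top_le_iff.1 ?_).symm
    calc ⊤ = τ * ((∫⁻ t in Icc a b, gz (c t)) + ∫⁻ t in Icc a b, gη (c t)) := by
          rw [ENNReal.add_eq_top.2 htop, ENNReal.mul_top hτ']
      _ = ∫⁻ t in Icc a b, τ * (gz (c t) + gη (c t)) := by
          rw [← lintegral_add_left (hgz.measurable_comp hc)]
          exact (lintegral_const_mul _
            ((hgz.measurable_comp hc).add (hgη.measurable_comp hc))).symm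
      _ ≤ _ := lintegral_mono fun t => le_add_self
  push Not at htop
  obtain ⟨φ, hφ, hφg⟩ := hgη.exists_hasUpperGradientOnIcc hc hab htop.2
  obtain ⟨ψ, hψ, hψg⟩ := hgz.exists_hasUpperGradientOnIcc hc hab htop.1
  replace hφ : ∀ t ∈ Icc a b, η (c t) = φ t := fun t ht => EReal.coe_injective (hφ t ht)
  replace hψ : ∀ t ∈ Icc a b, z (c t) = ψ t := fun t ht => EReal.coe_injective (hψ t ht)
  rw [ereal_abs_coe_sub_coe, ← edist_eq_enorm_sub, hφ a ⟨le_rfl, hab.le⟩,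
    hψ a ⟨le_rfl, hab.le⟩, hφ b ⟨hab.le, le_rfl⟩, hψ b ⟨hab.le, le_rfl⟩]
  refine (hφg.edist_mul_le hab.le hψg (hgη.measurable_comp hc) (hgz.measurable_comp hc)
    htop.2 htop.1 (ENNReal.coe_pos.2 hτ)).trans_eq ?_
  refine setLIntegral_congr_fun measurableSet_Icc fun t ht => ?_
  simp only [hφ t ht, hψ t ht]

end Borel

end IsUpperGradient

/-- The truncation of `x` to the interval `[lo, hi]`. -/
def clamp {β : Type*} [LinearOrder β] (lo hi x : β) : β := max lo (min hi x)

lemma le_and_le_of_clamp_lt_clamp {β : Type*} [LinearOrder β] {lo hi x y : β}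
    (h : clamp lo hi x < clamp lo hi y) :
    x ≤ clamp lo hi x ∧ clamp lo hi y ≤ y ∧ lo ≤ clamp lo hi x ∧ clamp lo hi y ≤ hi := by
  unfold clamp at *
  grind

lemma exists_clamp_coe_eq_coe {lo hi : EReal} (hlo : lo ≠ ⊤) (hhi : hi ≠ ⊥) (y : ℝ) :
    ∃ p : ℝ, clamp lo hi y = p := by
  refine ⟨(clamp lo hi y).toReal, (EReal.coe_toReal ?_ ?_).symm⟩
  · exact (max_lt hlo.lt_top ((min_le_right _ _).trans_lt (EReal.coe_lt_top y))).ne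
  · exact ((lt_min hhi.bot_lt (EReal.bot_lt_coe y)).trans_le (le_max_right _ _)).ne'

namespace IsUpperGradient

lemma ofReal_sub_le_setLIntegral_indicator {u : α → EReal} {g : α → ℝ≥0∞}
    (hg : IsUpperGradient u g) {c : ℝ → α} (hc : LipschitzWith 1 c) {a b : ℝ} (hab : a < b)
    (hfin : ∫⁻ t in Icc a b, g (c t) ≠ ⊤) {lo hi : EReal} {p q : ℝ} (hpq : p < q)
    (hlo : lo ≤ p) (hhi : q ≤ hi)
    (hcross : (u (c a) ≤ p ∧ q ≤ u (c b)) ∨ (u (c b) ≤ p ∧ q ≤ u (c a))) :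
    ENNReal.ofReal (q - p) ≤
      ∫⁻ t in Icc a b, {x | lo < u x ∧ u x < hi}.indicator g (c t) := by
  obtain ⟨φ, hφ, hφg⟩ := hg.exists_hasUpperGradientOnIcc hc hab hfin
  rw [hφ a ⟨le_rfl, hab.le⟩, hφ b ⟨hab.le, le_rfl⟩] at hcross
  obtain ⟨s, t, has, hst, htb, hqp, hφpq⟩ := exists_Ioo_subset_preimage_Ioo hab.le
    (hφg.continuousOn hfin) hpq (by exact_mod_cast hcross)
  calc ENNReal.ofReal (q - p) ≤ edist (φ s) (φ t) := by
        rw [edist_dist, Real.dist_eq]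
        exact ENNReal.ofReal_le_ofReal hqp
    _ ≤ ∫⁻ r in Icc s t, g (c r) := hφg s t has hst.le htb
    _ = ∫⁻ r in Ioo s t, g (c r) := by rw [restrict_Ioo_eq_restrict_Icc]
    _ = ∫⁻ r in Ioo s t, {x | lo < u x ∧ u x < hi}.indicator g (c r) := by
        refine setLIntegral_congr_fun measurableSet_Ioo fun r hr => ?_
        have hur : u (c r) = φ r := hφ r ⟨has.trans hr.1.le, hr.2.le.trans htb⟩
        refine (indicator_of_mem ?_ _).symm
        rw [mem_ofPred_eq, hur]
        exact ⟨hlo.trans_lt (EReal.coe_lt_coe_iff.2 (hφpq r hr).1),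
          (EReal.coe_lt_coe_iff.2 (hφpq r hr).2).trans_le hhi⟩
    _ ≤ _ := lintegral_mono_set (Ioo_subset_Icc_self.trans (Icc_subset_Icc has htb))

lemma ereal_abs_clamp_sub_clamp_le {u : α → EReal} {g : α → ℝ≥0∞} (hg : IsUpperGradient u g)
    {c : ℝ → α} (hc : LipschitzWith 1 c) {a b : ℝ} (hab : a < b)
    (hfin : ∫⁻ t in Icc a b, g (c t) ≠ ⊤) {lo hi : EReal} (hlo : lo ≠ ⊤) (hhi : hi ≠ ⊥) :
    (clamp lo hi (u (c a)) - clamp lo hi (u (c b))).abs ≤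
      ∫⁻ t in Icc a b, {x | lo < u x ∧ u x < hi}.indicator g (c t) := by
  obtain ⟨φ, hφ, -⟩ := hg.exists_hasUpperGradientOnIcc hc hab hfin
  obtain ⟨p, hp⟩ : ∃ p : ℝ, clamp lo hi (u (c a)) = p := by
    rw [hφ a ⟨le_rfl, hab.le⟩]
    exact exists_clamp_coe_eq_coe hlo hhi _
  obtain ⟨q, hq⟩ : ∃ q : ℝ, clamp lo hi (u (c b)) = q := by
    rw [hφ b ⟨hab.le, le_rfl⟩]
    exact exists_clamp_coe_eq_coe hlo hhi _
  rw [hp, hq, ← EReal.coe_sub, EReal.abs_def]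
  rcases lt_trichotomy p q with hlt | rfl | hlt
  · obtain ⟨ha, hb, hlop, hqhi⟩ := le_and_le_of_clamp_lt_clamp (lo := lo) (hi := hi)
      (x := u (c a)) (y := u (c b)) (by rw [hp, hq]; exact_mod_cast hlt)
    rw [hp] at ha hlop
    rw [hq] at hb hqhi
    rw [abs_sub_comm, abs_of_pos (sub_pos.2 hlt)]
    exact hg.ofReal_sub_le_setLIntegral_indicator hc hab hfin hlt hlop hqhi (Or.inl ⟨ha, hb⟩)
  · simp
  · obtain ⟨hb, ha, hloq, hphi⟩ := le_and_le_of_clamp_lt_clamp (lo := lo) (hi := hi)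
      (x := u (c b)) (y := u (c a)) (by rw [hp, hq]; exact_mod_cast hlt)
    rw [hp] at ha hphi
    rw [hq] at hb hloq
    rw [abs_of_pos (sub_pos.2 hlt)]
    exact hg.ofReal_sub_le_setLIntegral_indicator hc hab hfin hlt hloq hphi (Or.inr ⟨hb, ha⟩)

/-- As in the product rule, the summand `τ * g` takes care of the curves of infinite gradient
integral. -/
lemma comp_clamp [BorelSpace α] {u : α → EReal} (hu : Measurable u) {g : α → ℝ≥0∞}
    (hg : IsUpperGradient u g) {lo hi : EReal} (hlo : lo ≠ ⊤) (hhi : hi ≠ ⊥) {τ : ℝ≥0}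
    (hτ : 0 < τ) :
    IsUpperGradient (fun x => clamp lo hi (u x))
      fun x => {x | lo < u x ∧ u x < hi}.indicator g x + τ * g x := by
  have hg_ind : Measurable ({x | lo < u x ∧ u x < hi}.indicator g) :=
    hg.1.indicator ((measurableSet_lt measurable_const hu).inter
      (measurableSet_lt hu measurable_const))
  refine isUpperGradient_iff.2 ⟨hg_ind.add (hg.1.const_mul _), fun c hc a b hab => ?_⟩
  have hg_ind_c : Measurable fun t => {x | lo < u x ∧ u x < hi}.indicator g (c t) :=
    hg_ind.comp hc.continuous.measurable
  rw [lintegral_add_left hg_ind_c, lintegral_const_mul _ (hg.measurable_comp hc)]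
  by_cases hfin : (∫⁻ t in Icc a b, g (c t)) = ⊤
  · simp [hfin, ENNReal.mul_top (ENNReal.coe_ne_zero.2 hτ.ne')]
  · exact (hg.ereal_abs_clamp_sub_clamp_le hc hab hfin hlo hhi).trans le_self_add

end IsUpperGradient

end UpperGradient

/-! ### The gradient part of the Newtonian quasi-seminorm -/

namespace QBFL

variable (X : QBFL P μ)

/-- The gradient part of the Newtonian quasi-seminorm: the least quasi-norm of an upper gradient
of `u`. -/
def grad (u : P → EReal) : ℝ≥0∞ := ⨅ g ∈ {g : P → ℝ≥0∞ | IsUpperGradient u g}, X.nrmE g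

lemma newt_eq_nrmE_add_grad (u : P → EReal) :
    X.newt u = X.nrmE (fun x => (u x).abs) + X.grad u := by
  rw [← X.nrm_eq_nrmE_abs]
  rfl

lemma grad_le_nrmE {u : P → EReal} {g : P → ℝ≥0∞} (h : IsUpperGradient u g) :
    X.grad u ≤ X.nrmE g :=
  iInf₂_le g h

lemma exists_isUpperGradient_nrmE_lt {u : P → EReal} {t : ℝ≥0∞} (h : X.grad u < t) :
    ∃ g, IsUpperGradient u g ∧ X.nrmE g < t := by
  simpa [grad, iInf_lt_iff] using h

lemma grad_le_newt (u : P → EReal) : X.grad u ≤ X.newt u := le_add_self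

lemma nrmE_abs_le_newt (u : P → EReal) : X.nrmE (fun x => (u x).abs) ≤ X.newt u :=
  le_self_add.trans_eq (X.newt_eq_nrmE_add_grad u).symm

lemma newt_mono {u v : P → EReal} (h0 : ∀ x, (u x).abs ≤ (v x).abs)
    (h : ∀ x y, (u x - u y).abs ≤ (v x - v y).abs) : X.newt u ≤ X.newt v := by
  rw [newt_eq_nrmE_add_grad, newt_eq_nrmE_add_grad]
  exact add_le_add (X.nrmE_mono h0)
    (le_iInf₂ fun _ hg => X.grad_le_nrmE (IsUpperGradient.of_abs_sub_le hg h))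

lemma grad_le_of_perturb {u : P → EReal} {g k : P → ℝ≥0∞} (hk : X.nrmE k < ⊤)
    (h : ∀ τ : ℝ≥0, 0 < τ → IsUpperGradient u fun x => g x + τ * k x) :
    X.grad u ≤ X.cc * X.nrmE g := by
  refine ENNReal.le_of_forall_pos_le_add fun ε hε _ => ?_
  obtain ⟨τ, hτ, hτε⟩ := ENNReal.exists_nnreal_pos_mul_lt (ENNReal.mul_ne_top X.cc_ne_top hk.ne)
    (ENNReal.coe_ne_zero.2 hε.ne')
  calc X.grad u ≤ X.cc * (X.nrmE g + X.nrmE fun x => τ * k x) :=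
        (X.grad_le_nrmE (h τ hτ)).trans (X.nrmE_add_le _ _)
    _ = X.cc * X.nrmE g + τ * (X.cc * X.nrmE k) := by rw [X.nrmE_const_mul]; ring
    _ ≤ X.cc * X.nrmE g + ε := by gcongr

variable [BorelSpace P]

lemma grad_le_of_abs_sub_le {u u₁ u₂ : P → EReal}
    (h : ∀ x y, (u x - u y).abs ≤ (u₁ x - u₁ y).abs + (u₂ x - u₂ y).abs) :
    X.grad u ≤ X.cc * (X.grad u₁ + X.grad u₂) := by
  rw [← ENNReal.div_le_iff' X.cc_ne_zero X.cc_ne_top, grad.eq_1 X u₁, grad.eq_1 X u₂]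
  simp only [ENNReal.iInf_add, ENNReal.add_iInf]
  refine le_iInf₂ fun g₂ hg₂ => le_iInf₂ fun g₁ hg₁ => ?_
  rw [ENNReal.div_le_iff' X.cc_ne_zero X.cc_ne_top]
  exact (X.grad_le_nrmE (IsUpperGradient.add_of_abs_sub_le hg₁ hg₂ h)).trans (X.nrmE_add_le _ _)

lemma newt_le_of_abs_le {u u₁ u₂ : P → EReal} (h0 : ∀ x, (u x).abs ≤ (u₁ x).abs + (u₂ x).abs)
    (h : ∀ x y, (u x - u y).abs ≤ (u₁ x - u₁ y).abs + (u₂ x - u₂ y).abs) :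
    X.newt u ≤ X.cc * (X.newt u₁ + X.newt u₂) := by
  simp only [newt_eq_nrmE_add_grad]
  calc _ ≤ X.cc * (X.nrmE (fun x => (u₁ x).abs) + X.nrmE (fun x => (u₂ x).abs)) +
        X.cc * (X.grad u₁ + X.grad u₂) :=
        add_le_add ((X.nrmE_mono h0).trans (X.nrmE_add_le _ _)) (X.grad_le_of_abs_sub_le h)
    _ = _ := by ring

lemma newt_sub_le (u v w : P → EReal) :
    X.newt (fun x => u x - w x) ≤
      X.cc * (X.newt (fun x => u x - v x) + X.newt fun x => v x - w x) :=
  X.newt_le_of_abs_le (fun _ => ereal_abs_sub_le _ _ _)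
    fun _ _ => ereal_abs_sub_sub_sub_le _ _ _ _ _ _

lemma newt_le_add_newt_sub (u v : P → EReal) :
    X.newt v ≤ X.cc * (X.newt u + X.newt fun x => u x - v x) :=
  X.newt_le_of_abs_le (fun _ => ereal_abs_le_add_abs_sub _ _)
    fun _ _ => ereal_abs_sub_le_add_sub_sub_sub _ _ _ _

lemma grad_clamp_le {u : P → EReal} (hu : Measurable u) {g : P → ℝ≥0∞}
    (hg : IsUpperGradient u g) (hfin : X.nrmE g < ⊤) {lo hi : EReal} (hlo : lo ≠ ⊤)
    (hhi : hi ≠ ⊥) :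
    X.grad (fun x => clamp lo hi (u x)) ≤
      X.cc * X.nrmE ({x | lo < u x ∧ u x < hi}.indicator g) :=
  X.grad_le_of_perturb hfin fun _ hτ => hg.comp_clamp hu hlo hhi hτ

lemma grad_mul_le {η z : P → ℝ} {gη gz : P → ℝ≥0∞} (hη : Measurable η) (hz : Measurable z)
    (hgη : IsUpperGradient (fun x => (η x : EReal)) gη)
    (hgz : IsUpperGradient (fun x => (z x : EReal)) gz) (hη_fin : X.nrmE gη < ⊤)
    (hz_fin : X.nrmE gz < ⊤) :
    X.grad (fun x => ((η x * z x : ℝ) : EReal)) ≤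
      X.cc * X.nrmE fun x => ‖η x‖ₑ * gz x + ‖z x‖ₑ * gη x := by
  refine X.grad_le_of_perturb (k := fun x => gz x + gη x) ?_ fun τ hτ => hgη.mul hη hz hgz hτ
  exact (X.nrmE_add_le _ _).trans_lt
    (ENNReal.mul_lt_top X.cc_lt_top (ENNReal.add_lt_top.2 ⟨hz_fin, hη_fin⟩))

end QBFL

/-! ### Lower semicontinuous majorants -/

namespace QBFL

variable {α : Type*} [TopologicalSpace α] [MeasurableSpace α] {ν : Measure α} (X : QBFL α ν)

/-- `ρ` is a lower semicontinuous majorant of `f` which vanishes off `V` and exceeds `f` by a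
function of quasi-norm at most `ε`, as in the Vitali–Carathéodory theorem. -/
structure IsLscMajorant (V : Set α) (f ρ : α → ℝ≥0∞) (ε : ℝ≥0∞) : Prop where
  lowerSemicontinuous : LowerSemicontinuous ρ
  eq_zero : ∀ x ∉ V, ρ x = 0
  le : ∀ x, f x ≤ ρ x
  nrmE_sub_le : X.nrmE (fun x => ρ x - f x) ≤ ε

variable {X}

lemma IsLscMajorant.add {V : Set α} {f f' ρ ρ' : α → ℝ≥0∞} {ε ε' : ℝ≥0∞}
    (h : X.IsLscMajorant V f ρ ε) (h' : X.IsLscMajorant V f' ρ' ε') :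
    X.IsLscMajorant V (fun x => f x + f' x) (fun x => ρ x + ρ' x) (X.cc * (ε + ε')) where
  lowerSemicontinuous := h.lowerSemicontinuous.add h'.lowerSemicontinuous
  eq_zero x hx := by simp [h.eq_zero x hx, h'.eq_zero x hx]
  le x := add_le_add (h.le x) (h'.le x)
  nrmE_sub_le := by
    calc _ ≤ X.nrmE fun x => (ρ x - f x) + (ρ' x - f' x) :=
          X.nrmE_mono fun x => add_tsub_add_le_tsub_add_tsub
      _ ≤ X.cc * (X.nrmE (fun x => ρ x - f x) + X.nrmE fun x => ρ' x - f' x) := X.nrmE_add_le _ _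
      _ ≤ X.cc * (ε + ε') := by
          gcongr
          exacts [h.nrmE_sub_le, h'.nrmE_sub_le]

lemma IsLscMajorant.tsum {V : Set α} {f ρ : ℕ → α → ℝ≥0∞} {ε : ℕ → ℝ≥0∞}
    (h : ∀ n, X.IsLscMajorant V (f n) (ρ n) (ε n)) :
    X.IsLscMajorant V (fun x => ∑' n, f n x) (fun x => ∑' n, ρ n x)
      (∑' n, X.cc ^ (n + 1) * ε n) where
  lowerSemicontinuous := lowerSemicontinuous_tsum fun n => (h n).lowerSemicontinuous
  eq_zero x hx := ENNReal.tsum_eq_zero.2 fun n => (h n).eq_zero x hx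
  le x := ENNReal.tsum_le_tsum fun n => (h n).le x
  nrmE_sub_le := by
    calc _ ≤ X.nrmE fun x => ∑' n, (ρ n x - f n x) := X.nrmE_mono fun x => by
          rw [tsub_le_iff_left, ← ENNReal.tsum_add]
          exact ENNReal.tsum_le_tsum fun n => le_add_tsub
      _ ≤ ∑' n, X.cc ^ (n + 1) * X.nrmE (fun x => ρ n x - f n x) := X.nrmE_tsum_le _
      _ ≤ _ := ENNReal.tsum_le_tsum fun n => by gcongr; exact (h n).nrmE_sub_le

lemma IsLscMajorant.nrmE_le {V : Set α} {f ρ : α → ℝ≥0∞} {ε : ℝ≥0∞}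
    (h : X.IsLscMajorant V f ρ ε) : X.nrmE ρ ≤ X.cc * (X.nrmE f + ε) :=
  calc X.nrmE ρ ≤ X.nrmE fun x => f x + (ρ x - f x) := X.nrmE_mono fun _ => le_add_tsub
    _ ≤ X.cc * (X.nrmE f + X.nrmE fun x => ρ x - f x) := X.nrmE_add_le _ _
    _ ≤ X.cc * (X.nrmE f + ε) := by gcongr; exact h.nrmE_sub_le

variable [OpensMeasurableSpace α] [ν.OuterRegular] (X)

lemma exists_isOpen_nrmE_sdiff_lt (hAC : X.HasACNorm) {V E : Set α} (hV : IsOpen V)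
    (hνV : ν V ≠ ⊤) (hχ : X.nrmE (V.indicator 1) < ⊤) (hE : MeasurableSet E) (hEV : E ⊆ V)
    {ε : ℝ≥0∞} (hε : 0 < ε) :
    ∃ U, IsOpen U ∧ E ⊆ U ∧ U ⊆ V ∧ X.nrmE ((U \ E).indicator 1) < ε := by
  choose U hEU hUo _ hUν using fun n : ℕ =>
    hE.exists_isOpen_sdiff_lt (ne_top_of_le_ne_top hνV (measure_mono hEV))
      (ENNReal.inv_ne_zero.2 (ENNReal.natCast_ne_top n))
  set W : ℕ → Set α := fun n => V ∩ ⋂ i ∈ Iic n, U i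
  have hWo (n : ℕ) : IsOpen (W n) :=
    hV.inter ((finite_Iic n).isOpen_biInter fun i _ => hUo i)
  have hWU (n : ℕ) : W n ⊆ U n := inter_subset_right.trans (biInter_subset_of_mem self_mem_Iic)
  have hanti : Antitone fun n => W n \ E := fun m n hmn =>
    sdiff_subset_sdiff_left <| inter_subset_inter_right _ <|
      biInter_subset_biInter_left (Iic_subset_Iic.2 hmn)
  have h0 : ν (⋂ n, W n \ E) = 0 := by
    have hle (n : ℕ) : ν (⋂ n, W n \ E) ≤ (n : ℝ≥0∞)⁻¹ :=
      (measure_mono ((iInter_subset _ n).trans (sdiff_subset_sdiff_left (hWU n)))).trans (hUν n).le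
    exact nonpos_iff_eq_zero.1 (ge_of_tendsto' ENNReal.tendsto_inv_nat_nhds_zero hle)
  obtain ⟨n, hn⟩ := ((X.tendsto_nrmE_indicator hAC (measurable_one.indicator hV.measurableSet) hχ
    (fun n => (hWo n).measurableSet.diff hE) hanti h0).eventually (gt_mem_nhds hε)).exists
  refine ⟨W n, hWo n, subset_inter hEV (subset_iInter₂ fun i _ => hEU i), inter_subset_left, ?_⟩
  rwa [indicator_indicator, inter_eq_left.2 (sdiff_subset.trans inter_subset_left)] at hn

lemma exists_isLscMajorant_indicator (hAC : X.HasACNorm) {V E : Set α} (hV : IsOpen V)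
    (hνV : ν V ≠ ⊤) (hχ : X.nrmE (V.indicator 1) < ⊤) (hE : MeasurableSet E) (hEV : E ⊆ V)
    (c : ℝ≥0) {ε : ℝ≥0∞} (hε : 0 < ε) :
    ∃ ρ, X.IsLscMajorant V (E.indicator fun _ => (c : ℝ≥0∞)) ρ ε := by
  obtain ⟨U, hU, hEU, hUV, hUε⟩ := X.exists_isOpen_nrmE_sdiff_lt hAC hV hνV hχ hE hEV
    (ENNReal.div_pos hε.ne' (ENNReal.coe_ne_top (r := c)))
  refine ⟨U.indicator fun _ => c, hU.lowerSemicontinuous_indicator zero_le,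
    fun x hx => indicator_of_notMem (fun h => hx (hUV h)) _,
    indicator_le_indicator_of_subset hEU fun _ => zero_le, ?_⟩
  calc _ = X.nrmE fun x => c * (U \ E).indicator 1 x := by
        congr with x
        by_cases hxE : x ∈ E
        · simp [hxE, hEU hxE]
        · by_cases hxU : x ∈ U <;> simp [hxE, hxU]
    _ = c * X.nrmE ((U \ E).indicator 1) := X.nrmE_const_mul _ _
    _ ≤ c * (ε / c) := by gcongr
    _ ≤ ε := ENNReal.mul_div_le

lemma exists_isLscMajorant_simpleFunc (hAC : X.HasACNorm) {V : Set α} (hV : IsOpen V)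
    (hνV : ν V ≠ ⊤) (hχ : X.nrmE (V.indicator 1) < ⊤) (f : SimpleFunc α ℝ≥0) {ε : ℝ≥0∞}
    (hε : 0 < ε) : ∃ ρ, X.IsLscMajorant V (V.indicator fun x => (f x : ℝ≥0∞)) ρ ε := by
  induction f using SimpleFunc.induction generalizing ε with
  | @const c s hs =>
    have h := X.exists_isLscMajorant_indicator hAC hV hνV hχ (hV.measurableSet.inter hs)
      inter_subset_left c hε
    rw [← indicator_indicator] at h
    convert h with _ x
    by_cases hx : x ∈ s <;> simp [hx]
  | @add f g _ hf hg =>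
    have hε' : 0 < ε / X.cc / 2 :=
      ENNReal.half_pos (ENNReal.div_pos hε.ne' X.cc_ne_top).ne'
    obtain ⟨ρ, hρ⟩ := hf hε'
    obtain ⟨ρ', hρ'⟩ := hg hε'
    refine ⟨fun x => ρ x + ρ' x, ?_⟩
    have h := hρ.add hρ'
    rw [ENNReal.add_halves, ENNReal.mul_div_cancel X.cc_ne_zero X.cc_ne_top] at h
    convert h with x
    by_cases hxV : x ∈ V <;> simp [hxV]

lemma exists_isLscMajorant (hAC : X.HasACNorm) {V : Set α} (hV : IsOpen V) (hνV : ν V ≠ ⊤)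
    (hχ : X.nrmE (V.indicator 1) < ⊤) {f : α → ℝ≥0∞} (hf : Measurable f) {ε : ℝ≥0∞}
    (hε : 0 < ε) : ∃ ρ, X.IsLscMajorant V (V.indicator f) ρ ε := by
  obtain ⟨d, hd, hdε⟩ := X.exists_pos_weights hε.ne'
  choose ρ hρ using fun n => X.exists_isLscMajorant_simpleFunc hAC hV hνV hχ
    (SimpleFunc.eapproxDiff f n) (ENNReal.coe_pos.2 (hd n))
  have hsum : V.indicator f =
      fun x => ∑' n, V.indicator (fun x => (SimpleFunc.eapproxDiff f n x : ℝ≥0∞)) x := by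
    ext x
    by_cases hx : x ∈ V <;> simp [hx, SimpleFunc.tsum_eapproxDiff f hf]
  have h := IsLscMajorant.tsum hρ
  rw [← hsum] at h
  exact ⟨_, { h with nrmE_sub_le := h.nrmE_sub_le.trans hdε.le }⟩

lemma exists_isLscMajorant_pos (hAC : X.HasACNorm) {V : Set α} (hV : IsOpen V) (hνV : ν V ≠ ⊤)
    (hχ : X.nrmE (V.indicator 1) < ⊤) {f : α → ℝ≥0∞} (hf : Measurable f) {ε : ℝ≥0∞}
    (hε : 0 < ε) :
    ∃ ρ, X.IsLscMajorant V (V.indicator f) ρ ε ∧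
      ∃ δ : ℝ≥0, 0 < δ ∧ ∀ x ∈ V, (δ : ℝ≥0∞) ≤ ρ x := by
  have hε' : 0 < ε / X.cc / 2 :=
    ENNReal.half_pos (ENNReal.div_pos hε.ne' X.cc_ne_top).ne'
  obtain ⟨ρ, hρ⟩ := X.exists_isLscMajorant hAC hV hνV hχ hf hε'
  obtain ⟨δ, hδ, hδε⟩ := ENNReal.exists_nnreal_pos_mul_lt hχ.ne hε'.ne'
  have hδV : X.IsLscMajorant V (fun _ => 0) (fun x => δ * V.indicator 1 x) (ε / X.cc / 2) := by
    refine ⟨?_, fun x hx => by simp [hx], fun x => zero_le, ?_⟩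
    · convert hV.lowerSemicontinuous_indicator (y := (δ : ℝ≥0∞)) zero_le with x
      by_cases hx : x ∈ V <;> simp [hx]
    · simpa only [tsub_zero, X.nrmE_const_mul] using hδε.le
  have h := hρ.add hδV
  simp only [add_zero, ENNReal.add_halves, ENNReal.mul_div_cancel X.cc_ne_zero X.cc_ne_top] at h
  exact ⟨_, h, δ, hδ, fun x hx => by simp [hx]⟩

end QBFL

/-! ### Compactness and semicontinuity along curves -/

lemma isCompact_setOf_lipschitzWith_mem_closedBall {α E : Type*} [PseudoMetricSpace α]
    [PseudoMetricSpace E] [ProperSpace E] (K : ℝ≥0) (a : α) (e : E) (R : ℝ) :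
    IsCompact {f : C(α, E) | LipschitzWith K f ∧ f a ∈ closedBall e R} := by
  refine ArzelaAscoli.isCompact_of_equicontinuous _ ?_
    (LipschitzWith.uniformEquicontinuous _ K fun f => f.2.1).equicontinuous
  have himage : ContinuousMap.toFun '' {f : C(α, E) | LipschitzWith K f ∧ f a ∈ closedBall e R} =
      {f | LipschitzWith K f} ∩ {f | f a ∈ closedBall e R} := by
    ext f
    exact ⟨by rintro ⟨g, hg, rfl⟩; exact hg, fun hf => ⟨⟨f, hf.1.continuous⟩, hf, rfl⟩⟩
  rw [himage]
  refine (isCompact_univ_pi fun x => isCompact_closedBall e (K * dist x a + R)).of_isClosed_subset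
    ((isClosed_setOfPred_lipschitzWith K).inter
      (isClosed_closedBall.preimage (continuous_apply a))) fun f hf x _ => ?_
  exact (dist_triangle _ (f a) _).trans (add_le_add (hf.1.dist_le_mul x a) hf.2)

lemma exists_subseq_tendsto_of_lipschitzWith {α E : Type*} [PseudoMetricSpace α] [ProperSpace α]
    [PseudoMetricSpace E] [ProperSpace E] {K : ℝ≥0} {f : ℕ → α → E}
    (hf : ∀ n, LipschitzWith K (f n)) {a : α} (ha : Bornology.IsBounded (range fun n => f n a)) :
    ∃ (g : α → E) (ψ : ℕ → ℕ), LipschitzWith K g ∧ StrictMono ψ ∧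
      ∀ x, Tendsto (fun n => f (ψ n) x) atTop (𝓝 (g x)) := by
  obtain ⟨R, hR⟩ := ha.subset_closedBall (f 0 a)
  obtain ⟨g, hg, ψ, hψ, hlim⟩ :=
    (isCompact_setOf_lipschitzWith_mem_closedBall K a (f 0 a) R).tendsto_subseq
      (x := fun n => ⟨f n, (hf n).continuous⟩) fun n => ⟨hf n, hR (mem_range_self n)⟩
  exact ⟨g, ψ, hg.1, hψ, fun x => ((continuous_eval_const x).tendsto g).comp hlim⟩

lemma tendsto_apply_of_lipschitzWith {α E : Type*} [PseudoMetricSpace α] [PseudoMetricSpace E]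
    {K : ℝ≥0} {f : ℕ → α → E} (hf : ∀ n, LipschitzWith K (f n)) {x : ℕ → α} {a : α} {e : E}
    (hx : Tendsto x atTop (𝓝 a)) (ha : Tendsto (fun n => f n a) atTop (𝓝 e)) :
    Tendsto (fun n => f n (x n)) atTop (𝓝 e) := by
  refine tendsto_of_tendsto_of_dist ha (squeeze_zero (fun _ => dist_nonneg)
    (fun n => (hf n).dist_le_mul a (x n)) ?_)
  simpa using ((tendsto_const_nhds (x := a)).dist hx).const_mul (K : ℝ)

lemma setLIntegral_Icc_le_liminf {α : Type*} [TopologicalSpace α] [MeasurableSpace α]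
    [BorelSpace α] {ρ : α → ℝ≥0∞} (hρ : LowerSemicontinuous ρ) {c : ℕ → ℝ → α}
    (hc : ∀ n, Continuous (c n)) {c' : ℝ → α} {a b' : ℝ} {b : ℕ → ℝ}
    (hb : Tendsto b atTop (𝓝 b')) (hcc' : ∀ t, Tendsto (fun n => c n t) atTop (𝓝 (c' t))) :
    ∫⁻ t in Icc a b', ρ (c' t) ≤ liminf (fun n => ∫⁻ t in Icc a (b n), ρ (c n t)) atTop := by
  simp_rw [← lintegral_indicator measurableSet_Icc fun t => ρ (c _ t)]
  refine le_trans ?_ (lintegral_liminf_le fun n =>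
    (hρ.measurable.comp (hc n).measurable).indicator measurableSet_Icc)
  rw [← restrict_Ico_eq_restrict_Icc, ← lintegral_indicator measurableSet_Ico]
  refine lintegral_mono fun t => indicator_apply_le' (fun ht => ?_) fun _ => zero_le
  have hev : ∀ᶠ n in atTop, (Icc a (b n)).indicator (fun t => ρ (c n t)) t = ρ (c n t) := by
    filter_upwards [hb.eventually (lt_mem_nhds ht.2)] with n hn
    exact indicator_of_mem (show t ∈ Icc a (b n) from ⟨ht.1, hn.le⟩) _
  rw [liminf_congr hev]
  exact (hρ.le_liminf (c' t)).trans (hcc' t).liminf_le_liminf_comp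

lemma liminf_add_liminf_le_liminf_add (a b : ℕ → ℝ≥0∞) :
    liminf a atTop + liminf b atTop ≤ liminf (fun n => a n + b n) atTop := by
  simp only [liminf_eq_iSup_iInf_of_nat]
  rw [ENNReal.iSup_add_iSup_of_monotone]
  · exact iSup_mono fun n => le_iInf₂ fun i hi => add_le_add (iInf₂_le i hi) (iInf₂_le i hi)
  · exact fun m n hmn => le_iInf₂ fun i hi => iInf₂_le i (hmn.trans hi)
  · exact fun m n hmn => le_iInf₂ fun i hi => iInf₂_le i (hmn.trans hi)

lemma add_setLIntegral_Icc_le_liminf {α : Type*} [PseudoMetricSpace α] [MeasurableSpace α]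
    [BorelSpace α] {h ρ : α → ℝ≥0∞} (hh : LowerSemicontinuous h) (hρ : LowerSemicontinuous ρ)
    {K : ℝ≥0} {c : ℕ → ℝ → α} (hc : ∀ n, LipschitzWith K (c n)) {c' : ℝ → α} {a b' : ℝ} {b : ℕ → ℝ}
    (hb : Tendsto b atTop (𝓝 b')) (hcc' : ∀ t, Tendsto (fun n => c n t) atTop (𝓝 (c' t))) :
    h (c' b') + ∫⁻ t in Icc a b', ρ (c' t) ≤
      liminf (fun n => h (c n (b n)) + ∫⁻ t in Icc a (b n), ρ (c n t)) atTop := by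
  have hend : h (c' b') ≤ liminf (fun n => h (c n (b n))) atTop :=
    (hh.le_liminf _).trans
      (tendsto_apply_of_lipschitzWith hc hb (hcc' b')).liminf_le_liminf_comp
  have hint := setLIntegral_Icc_le_liminf hρ (fun n => (hc n).continuous) (a := a) hb hcc'
  exact (add_le_add hend hint).trans (liminf_add_liminf_le_liminf_add _ _)

lemma exists_subseq_curve_tendsto {α : Type*} [MetricSpace α] [ProperSpace α] {c : ℕ → ℝ → α}
    (hc : ∀ n, LipschitzWith 1 (c n)) {L : ℝ} {b : ℕ → ℝ} (hb : ∀ n, b n ∈ Icc 0 L) {y : α}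
    (hy : Tendsto (fun n => c n 0) atTop (𝓝 y)) :
    ∃ (θ : ℕ → ℕ) (c' : ℝ → α), ∃ b' ∈ Icc 0 L, StrictMono θ ∧ LipschitzWith 1 c' ∧ c' 0 = y ∧
      Tendsto (fun n => b (θ n)) atTop (𝓝 b') ∧
      ∀ t, Tendsto (fun n => c (θ n) t) atTop (𝓝 (c' t)) := by
  obtain ⟨b', hb', φ, hφ, hbφ⟩ := isCompact_Icc.tendsto_subseq hb
  have hyφ : Tendsto (fun n => c (φ n) 0) atTop (𝓝 y) := hy.comp hφ.tendsto_atTop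
  obtain ⟨c', ψ, hc', hψ, hcψ⟩ := exists_subseq_tendsto_of_lipschitzWith
    (fun n => hc (φ n)) (isBounded_range_of_tendsto _ hyφ)
  exact ⟨φ ∘ ψ, c', b', hb', hφ.comp hψ, hc',
    tendsto_nhds_unique (hcψ 0) (hyφ.comp hψ.tendsto_atTop), hbφ.comp hψ.tendsto_atTop, hcψ⟩

lemma exists_first_exit {α : Type*} [TopologicalSpace α] {c : ℝ → α} (hc : Continuous c)
    {V : Set α} (hV : IsOpen V) {a b : ℝ} (hab : a ≤ b) :
    ∃ t ∈ Icc a b, (∀ s ∈ Ico a t, c s ∈ V) ∧ (t = b ∨ c t ∉ V) := by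
  have hK : IsCompact (Icc a b ∩ ({b} ∪ c ⁻¹' Vᶜ)) :=
    isCompact_Icc.inter_right (isClosed_singleton.union (hV.isClosed_compl.preimage hc))
  obtain ⟨t, ⟨ht, htV⟩, hmin⟩ := hK.exists_isLeast ⟨b, ⟨hab, le_rfl⟩, Or.inl rfl⟩
  refine ⟨t, ht, fun s hs => ?_, htV⟩
  by_contra hsV
  exact hs.2.not_ge (hmin ⟨⟨hs.1, hs.2.le.trans ht.2⟩, Or.inr hsV⟩)

/-! ### The path infimum -/

lemma lipschitzWith_ite_le {E : Type*} [PseudoMetricSpace E] {K : ℝ≥0} {c₁ c₂ : ℝ → E}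
    (h₁ : LipschitzWith K c₁) (h₂ : LipschitzWith K c₂) {b : ℝ} (hb : c₁ b = c₂ b) :
    LipschitzWith K fun t => if t ≤ b then c₁ t else c₂ t := by
  refine LipschitzWith.of_dist_le_mul fun s t => ?_
  wlog hst : s ≤ t generalizing s t
  · rw [dist_comm, dist_comm s]
    exact this t s (le_of_not_ge hst)
  rcases le_or_gt t b with htb | htb
  · simpa [htb, hst.trans htb] using h₁.dist_le_mul s t
  rcases le_or_gt s b with hsb | hsb
  · simp only [hsb, htb.not_ge, if_true, if_false]
    calc dist (c₁ s) (c₂ t) ≤ dist (c₁ s) (c₁ b) + dist (c₂ b) (c₂ t) := by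
          rw [← hb]
          exact dist_triangle _ _ _
      _ ≤ K * dist s b + K * dist b t := add_le_add (h₁.dist_le_mul s b) (h₂.dist_le_mul b t)
      _ = K * dist s t := by
          rw [← mul_add, Real.dist_eq, Real.dist_eq, Real.dist_eq, abs_of_nonpos (sub_nonpos.2 hsb),
            abs_of_neg (sub_neg.2 htb), abs_of_nonpos (sub_nonpos.2 hst)]
          ring
  · simpa [hsb.not_ge, htb.not_ge] using h₂.dist_le_mul s t

section PathInf

variable {α : Type*} [PseudoMetricSpace α] {h ρ : α → ℝ≥0∞}

/-- The infimum of `h y + ∫_γ ρ ds` over all curves `γ` from `x` to some point `y`, constant curves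
included. It is the largest minorant of `h` with `ρ` as an upper gradient. -/
def pathInf (h ρ : α → ℝ≥0∞) (x : α) : ℝ≥0∞ :=
  ⨅ (c : ℝ → α) (l : ℝ) (_ : LipschitzWith 1 c ∧ 0 ≤ l ∧ c 0 = x),
    h (c l) + ∫⁻ t in Icc 0 l, ρ (c t)

lemma pathInf_le {c : ℝ → α} (hc : LipschitzWith 1 c) {a b : ℝ} (hab : a ≤ b) :
    pathInf h ρ (c a) ≤ h (c b) + ∫⁻ t in Icc a b, ρ (c t) := by
  have hca : LipschitzWith 1 fun t : ℝ => c (t + a) := by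
    simpa [Function.comp_def] using hc.comp (isometry_add_right a).lipschitz
  have hle : pathInf h ρ (c a) ≤
      h (c (b - a + a)) + ∫⁻ t in Icc 0 (b - a), ρ (c (t + a)) :=
    iInf₂_le_of_le (fun t => c (t + a)) (b - a)
      (iInf_le_of_le ⟨hca, sub_nonneg.2 hab, congrArg c (zero_add a)⟩ le_rfl)
  simpa only [sub_add_cancel, zero_add,
    setLIntegral_Icc_comp_add_right fun t => ρ (c t)] using hle

lemma pathInf_le_self (x : α) : pathInf h ρ x ≤ h x := by
  simpa using pathInf_le (h := h) (ρ := ρ) (LipschitzWith.const' (K := 1) x) (le_refl (0 : ℝ))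

lemma exists_lt_of_pathInf_lt {x : α} {s : ℝ≥0∞} (hs : pathInf h ρ x < s) (a : ℝ) :
    ∃ (c : ℝ → α) (b : ℝ), LipschitzWith 1 c ∧ a ≤ b ∧ c a = x ∧
      h (c b) + ∫⁻ t in Icc a b, ρ (c t) < s := by
  simp only [pathInf, iInf_lt_iff] at hs
  obtain ⟨c, l, ⟨hc, hl, hcx⟩, hlt⟩ := hs
  have hca : LipschitzWith 1 fun t : ℝ => c (t - a) := by
    simpa [Function.comp_def, sub_eq_add_neg] using hc.comp (isometry_add_right (-a)).lipschitz
  refine ⟨fun t => c (t - a), l + a, hca, by linarith, by simpa using hcx, ?_⟩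
  simpa [setLIntegral_Icc_comp_add_right (fun t => ρ (c t)), sub_eq_add_neg, add_assoc] using hlt

lemma pathInf_le_add {c : ℝ → α} (hc : LipschitzWith 1 c) {a b : ℝ} (hab : a ≤ b) :
    pathInf h ρ (c a) ≤ pathInf h ρ (c b) + ∫⁻ t in Icc a b, ρ (c t) := by
  rw [← tsub_le_iff_right]
  refine le_of_forall_gt_imp_ge_of_dense fun s hs => ?_
  obtain ⟨p, d, hp, hbd, hpb, hlt⟩ := exists_lt_of_pathInf_lt hs b
  set γ : ℝ → α := fun t => if t ≤ b then c t else p t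
  have hγ : LipschitzWith 1 γ := lipschitzWith_ite_le hc hp hpb.symm
  have hγc : ∀ t ≤ b, γ t = c t := fun t ht => if_pos ht
  have hγp : ∀ t, b ≤ t → γ t = p t := by
    intro t ht
    rcases ht.eq_or_lt with rfl | ht
    · rw [hγc b le_rfl, hpb]
    · exact if_neg ht.not_ge
  have hsplit : ∫⁻ t in Icc a d, ρ (γ t) =
      (∫⁻ t in Icc a b, ρ (c t)) + ∫⁻ t in Icc b d, ρ (p t) := by
    rw [← setLIntegral_Icc_add_adjacent _ hab hbd]
    congr 1
    · exact setLIntegral_congr_fun measurableSet_Icc fun t ht => congrArg ρ (hγc t ht.2)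
    · exact setLIntegral_congr_fun measurableSet_Icc fun t ht => congrArg ρ (hγp t ht.1)
  rw [tsub_le_iff_right]
  calc pathInf h ρ (c a) ≤ h (γ d) + ∫⁻ t in Icc a d, ρ (γ t) := by
        rw [← hγc a hab]
        exact pathInf_le hγ (hab.trans hbd)
    _ = (h (p d) + ∫⁻ t in Icc b d, ρ (p t)) + ∫⁻ t in Icc a b, ρ (c t) := by
        rw [hγp d hbd, hsplit]
        ring
    _ ≤ s + ∫⁻ t in Icc a b, ρ (c t) := by gcongr

lemma pathInf_le_add' {c : ℝ → α} (hc : LipschitzWith 1 c) {a b : ℝ} (hab : a ≤ b) :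
    pathInf h ρ (c b) ≤ pathInf h ρ (c a) + ∫⁻ t in Icc a b, ρ (c t) := by
  have hrefl : LipschitzWith 1 fun t => c (a + b - t) := by
    simpa [Function.comp_def] using hc.comp (IsometryEquiv.subLeft (a + b)).isometry.lipschitz
  simpa [setLIntegral_Icc_comp_sub_left fun t => ρ (c t)] using
    pathInf_le_add (h := h) (ρ := ρ) hrefl hab

lemma le_pathInf {w : α → ℝ≥0∞} (hwh : ∀ x, w x ≤ h x)
    (hw : ∀ c : ℝ → α, LipschitzWith 1 c → ∀ a b, a ≤ b →
      w (c a) ≤ w (c b) + ∫⁻ t in Icc a b, ρ (c t)) (x : α) : w x ≤ pathInf h ρ x := by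
  refine le_of_forall_gt_imp_ge_of_dense fun s hs => ?_
  obtain ⟨c, b, hc, hb, rfl, hlt⟩ := exists_lt_of_pathInf_lt hs 0
  exact (hw c hc 0 b hb).trans ((add_le_add_left (hwh _) _).trans hlt.le)

lemma exists_lt_of_pathInf_lt_of_le {V : Set α} (hV : IsOpen V) (hh : ∀ x ∉ V, h x = 0)
    {δ : ℝ≥0} (hρ : ∀ x ∈ V, δ ≤ ρ x) {x : α} {s : ℝ≥0∞} (hs : pathInf h ρ x < s) :
    ∃ (c : ℝ → α) (b : ℝ), LipschitzWith 1 c ∧ 0 ≤ b ∧ c 0 = x ∧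
      h (c b) + ∫⁻ t in Icc 0 b, ρ (c t) < s ∧ δ * ENNReal.ofReal b < s := by
  obtain ⟨c, b, hc, hb, hcx, hlt⟩ := exists_lt_of_pathInf_lt hs 0
  obtain ⟨t, ht, htV, hexit⟩ := exists_first_exit hc.continuous hV hb
  have hlt' : h (c t) + ∫⁻ r in Icc 0 t, ρ (c r) < s := by
    refine lt_of_le_of_lt ?_ hlt
    rcases hexit with rfl | hct
    · exact le_rfl
    · rw [hh _ hct, zero_add]
      exact (setLIntegral_Icc_le_of_le _ le_rfl ht.2).trans le_add_self
  refine ⟨c, t, hc, ht.1, hcx, hlt', lt_of_le_of_lt ?_ hlt'⟩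
  calc (δ : ℝ≥0∞) * ENNReal.ofReal t = ∫⁻ _ in Ico 0 t, (δ : ℝ≥0∞) := by simp
    _ ≤ ∫⁻ r in Ico 0 t, ρ (c r) :=
      setLIntegral_mono' measurableSet_Ico fun r hr => hρ _ (htV r hr)
    _ ≤ h (c t) + ∫⁻ r in Icc 0 t, ρ (c r) := by
      rw [restrict_Ico_eq_restrict_Icc]
      exact le_add_self

end PathInf

-- The direct method: near-optimal curves from points near `y` have bounded length, so they
-- subconverge to a curve from `y`, along which the functional is lower semicontinuous.
lemma lowerSemicontinuous_pathInf {α : Type*} [MetricSpace α] [ProperSpace α] [MeasurableSpace α]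
    [BorelSpace α] {V : Set α} (hV : IsOpen V) {h ρ : α → ℝ≥0∞} (hh : LowerSemicontinuous h)
    (hρ : LowerSemicontinuous ρ) (hh0 : ∀ x ∉ V, h x = 0) {δ : ℝ≥0} (hδ : 0 < δ)
    (hρδ : ∀ x ∈ V, δ ≤ ρ x) : LowerSemicontinuous (pathInf h ρ) := by
  refine lowerSemicontinuous_iff_isClosed_preimage.2 fun s => ?_
  rcases eq_or_ne s ⊤ with rfl | hs
  · simp
  refine IsSeqClosed.isClosed fun x y hx hxy => ?_
  have hlt (n : ℕ) : pathInf h ρ (x n) < s + (n + 1 : ℝ≥0∞)⁻¹ :=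
    lt_of_le_of_lt (hx n) (ENNReal.lt_add_right hs (by simp))
  choose c b hc hb hcx hval hlen using fun n =>
    exists_lt_of_pathInf_lt_of_le hV hh0 hρδ (hlt n)
  set L : ℝ := ((s + 1) / δ).toReal
  have hδ0 : (δ : ℝ≥0∞) ≠ 0 := by exact_mod_cast hδ.ne'
  have hbL (n : ℕ) : b n ∈ Icc 0 L := by
    refine ⟨hb n, (ENNReal.ofReal_le_iff_le_toReal (ENNReal.div_ne_top (by simp [hs]) hδ0)).1 ?_⟩
    rw [ENNReal.le_div_iff_mul_le (Or.inl hδ0) (Or.inl ENNReal.coe_ne_top), mul_comm]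
    refine (hlen n).le.trans (add_le_add_right ?_ s)
    simp
  obtain ⟨θ, c', b', hb', hθ, hc', hy, hbθ, hcθ⟩ :=
    exists_subseq_curve_tendsto hc hbL (by simpa only [hcx] using hxy)
  have hlim : Tendsto (fun n => s + (θ n + 1 : ℝ≥0∞)⁻¹) atTop (𝓝 s) := by
    simpa [Function.comp_def] using tendsto_const_nhds.add
      ((ENNReal.tendsto_inv_nat_nhds_zero.comp (tendsto_add_atTop_nat 1)).comp hθ.tendsto_atTop)
  calc pathInf h ρ y ≤ h (c' b') + ∫⁻ t in Icc 0 b', ρ (c' t) := hy ▸ pathInf_le hc' hb'.1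
    _ ≤ liminf (fun n => h (c (θ n) (b (θ n))) +
        ∫⁻ t in Icc 0 (b (θ n)), ρ (c (θ n) t)) atTop :=
      add_setLIntegral_Icc_le_liminf hh hρ (fun n => hc (θ n)) hbθ hcθ
    _ ≤ liminf (fun n => s + (θ n + 1 : ℝ≥0∞)⁻¹) atTop :=
      liminf_le_liminf (Eventually.of_forall fun n => (hval (θ n)).le)
    _ = s := hlim.liminf_eq

/-! ### Quasi-continuity -/

lemma IsUpperGradient.ereal_abs_le_add_setLIntegral_indicator {α : Type*} [PseudoMetricSpace α]
    [MeasurableSpace α] {u : α → EReal} {g : α → ℝ≥0∞} (hg : IsUpperGradient u g) {V : Set α}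
    (hV : IsOpen V) (hu : ∀ x ∉ V, u x = 0) {c : ℝ → α} (hc : LipschitzWith 1 c) {a b : ℝ}
    (hab : a ≤ b) :
    (u (c a)).abs ≤ (u (c b)).abs + ∫⁻ t in Icc a b, V.indicator g (c t) := by
  obtain ⟨t, ht, htV, hexit⟩ := exists_first_exit hc.continuous hV hab
  have hend : (u (c t)).abs ≤ (u (c b)).abs := by
    rcases hexit with rfl | hct
    · exact le_rfl
    · simp [hu _ hct]
  refine le_trans ?_ (add_le_add_left hend _)
  rcases ht.1.eq_or_lt with rfl | hat
  · exact le_self_add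
  calc (u (c a)).abs ≤ (u (c t)).abs + (u (c t) - u (c a)).abs := ereal_abs_le_add_abs_sub _ _
    _ ≤ (u (c t)).abs + ∫⁻ r in Ico a t, g (c r) := by
      rw [ereal_abs_sub_comm, restrict_Ico_eq_restrict_Icc]
      exact add_le_add_right (hg.ereal_abs_sub_le hc hat) _
    _ = (u (c t)).abs + ∫⁻ r in Ico a t, V.indicator g (c r) := by
      rw [setLIntegral_congr_fun measurableSet_Ico fun r hr =>
        (indicator_of_mem (htV r hr) g).symm]
    _ ≤ (u (c t)).abs + ∫⁻ r in Icc a b, V.indicator g (c r) := by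
      gcongr
      exact Ico_subset_Icc_self.trans (Icc_subset_Icc_right ht.2)

lemma enorm_toReal_min_one_sub_le {a b i : ℝ≥0∞} (hab : a ≤ b + i) (hba : b ≤ a + i) :
    ‖(min 1 a).toReal - (min 1 b).toReal‖ₑ ≤ i := by
  have hfin (x : ℝ≥0∞) : min 1 x ≠ ⊤ := (min_le_left 1 x).trans_lt one_lt_top |>.ne
  have hmin {x y : ℝ≥0∞} (h : x ≤ y + i) : min 1 x ≤ min 1 y + i := by
    rw [min_add]
    exact min_le_min le_self_add h
  rcases eq_or_ne i ⊤ with rfl | hi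
  · exact le_top
  have hreal {x y : ℝ≥0∞} (h : x ≤ y + i) : (min 1 x).toReal - (min 1 y).toReal ≤ i.toReal := by
    rw [sub_le_iff_le_add', ← toReal_add (hfin y) hi]
    exact toReal_mono (add_ne_top.2 ⟨hfin y, hi⟩) (hmin h)
  rw [Real.enorm_eq_ofReal_abs, ofReal_le_iff_le_toReal hi]
  exact abs_sub_le_iff.2 ⟨hreal hab, hreal hba⟩

lemma isUpperGradient_toReal_min_one {α : Type*} [PseudoMetricSpace α] [MeasurableSpace α]
    {h ρ : α → ℝ≥0∞} (hρ : Measurable ρ) :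
    IsUpperGradient (fun x => (((min 1 (pathInf h ρ x)).toReal : ℝ) : EReal)) ρ := by
  refine isUpperGradient_iff.2 ⟨hρ, fun c hc a b hab => ?_⟩
  rw [ereal_abs_coe_sub_coe]
  exact enorm_toReal_min_one_sub_le (pathInf_le_add hc hab.le) (pathInf_le_add' hc hab.le)

namespace QBFL

lemma exists_isClosed_mul_abs_le_one [BorelSpace P] [ProperSpace P] [μ.OuterRegular] (X : QBFL P μ)
    (hAC : X.HasACNorm) {V : Set P} (hV : IsOpen V) (hμV : μ V ≠ ⊤)
    (hχ : X.nrmE (V.indicator 1) < ⊤) {z : P → EReal} (hz : Measurable z) (hz0 : ∀ x ∉ V, z x = 0)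
    {g : P → ℝ≥0∞} (hg : IsUpperGradient z g) (a : ℝ≥0) {ε : ℝ≥0∞} (hε : 0 < ε) :
    ∃ (F : Set P) (w : P → ℝ) (ρ : P → ℝ≥0∞), IsClosed F ∧ (∀ x ∈ F, a * (z x).abs ≤ 1) ∧
      Measurable w ∧ (∀ x, w x ∈ Icc 0 1) ∧ (∀ x ∉ F, w x = 1) ∧
      IsUpperGradient (fun x => (w x : EReal)) ρ ∧
      X.nrmE (fun x => ‖w x‖ₑ) ≤ X.cc * (a * X.nrmE (fun x => (z x).abs) + ε) ∧
      X.nrmE ρ ≤ X.cc * (a * X.nrmE g + ε) := by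
  obtain ⟨ρ, hρ, δ, hδ, hρδ⟩ := X.exists_isLscMajorant_pos hAC hV hμV hχ (hg.1.const_mul a) hε
  obtain ⟨h, hh⟩ := X.exists_isLscMajorant hAC hV hμV hχ
    ((measurable_ereal_abs.comp hz).const_mul a) hε
  have hnrm {f k : P → ℝ≥0∞} (hk : X.IsLscMajorant V (V.indicator fun x => a * f x) k ε) :
      X.nrmE k ≤ X.cc * (a * X.nrmE f + ε) := by
    rw [← X.nrmE_const_mul]
    exact hk.nrmE_le.trans (by gcongr; exact X.nrmE_mono fun x => indicator_le_self' (by simp) x)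
  have hzh (x : P) : a * (z x).abs ≤ h x := by
    by_cases hx : x ∈ V
    · exact (indicator_of_mem hx _).ge.trans (hh.le x)
    · simp [hz0 x hx]
  have hzA : ∀ x, a * (z x).abs ≤ pathInf h ρ x := by
    refine le_pathInf hzh fun c hc s t hst => ?_
    calc a * (z (c s)).abs
        ≤ a * ((z (c t)).abs + ∫⁻ r in Icc s t, V.indicator g (c r)) := by
          gcongr
          exact hg.ereal_abs_le_add_setLIntegral_indicator hV hz0 hc hst
      _ = a * (z (c t)).abs + ∫⁻ r in Icc s t, V.indicator (fun x => a * g x) (c r) := by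
          rw [mul_add, ← lintegral_const_mul' _ _ coe_ne_top]
          simp_rw [indicator_const_mul]
      _ ≤ a * (z (c t)).abs + ∫⁻ r in Icc s t, ρ (c r) := by
          gcongr with r
          exact hρ.le (c r)
  have hA : LowerSemicontinuous (pathInf h ρ) :=
    lowerSemicontinuous_pathInf hV hh.lowerSemicontinuous hρ.lowerSemicontinuous hh.eq_zero hδ hρδ
  refine ⟨{x | pathInf h ρ x ≤ 1}, fun x => (min 1 (pathInf h ρ x)).toReal, ρ,
    hA.isClosed_preimage 1, fun x hx => (hzA x).trans hx,
    (measurable_const.min hA.measurable).ennreal_toReal,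
    fun x => ⟨toReal_nonneg, toReal_le_of_le_ofReal zero_le_one (by simp)⟩, fun x hx => ?_,
    isUpperGradient_toReal_min_one hρ.lowerSemicontinuous.measurable, ?_, hnrm hρ⟩
  · have hx' : 1 < pathInf h ρ x := not_le.1 hx
    simp [min_eq_left hx'.le]
  · refine (X.nrmE_mono fun x => ?_).trans (hnrm hh)
    rw [Real.enorm_of_nonneg toReal_nonneg]
    exact ofReal_toReal_le.trans ((min_le_right _ _).trans (pathInf_le_self x))

end QBFL

/-! ### Cutoff functions and products -/

lemma clamp_eq_self {β : Type*} [LinearOrder β] {lo hi x : β} (h : x ∈ Icc lo hi) :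
    clamp lo hi x = x := by
  rw [clamp, min_eq_right h.2, max_eq_right h.1]

lemma isUpperGradient_indicator_of_lipschitzWith {α : Type*} [PseudoMetricSpace α]
    [MeasurableSpace α] [OpensMeasurableSpace α] {η : α → ℝ} {K : ℝ≥0} (hη : LipschitzWith K η)
    {lo hi : ℝ} (h : ∀ x, η x ∈ Icc lo hi) :
    IsUpperGradient (fun x => (η x : EReal))
      ({x | lo < η x ∧ η x < hi}.indicator fun _ => (K : ℝ≥0∞)) := by
  have hm := hη.continuous.measurable
  have hmeas : MeasurableSet {x | lo < η x ∧ η x < hi} :=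
    (measurableSet_lt measurable_const hm).inter (measurableSet_lt hm measurable_const)
  refine isUpperGradient_iff.2 ⟨measurable_const.indicator hmeas, fun c hc a b hab => ?_⟩
  have := (IsUpperGradient.const_of_lipschitzWith hη).ereal_abs_clamp_sub_clamp_le hc hab
    (by simp [ENNReal.mul_eq_top]) (EReal.coe_ne_top lo) (EReal.coe_ne_bot hi)
  have hclamp (x : α) : clamp (lo : EReal) hi (η x) = η x :=
    clamp_eq_self ⟨EReal.coe_le_coe_iff.2 (h x).1, EReal.coe_le_coe_iff.2 (h x).2⟩
  simpa only [hclamp, EReal.coe_lt_coe_iff] using this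

lemma exists_lipschitzWith_cutoff {α : Type*} [PseudoEMetricSpace α] (C : Set α) {r : ℝ}
    (hr : 0 < r) :
    ∃ η : α → ℝ, LipschitzWith r.toNNReal⁻¹ η ∧ (∀ x, η x ∈ Icc 0 1) ∧ (∀ x ∈ C, η x = 1) ∧
      ∀ x ∉ thickening r C, η x = 0 :=
  ⟨fun x => thickenedIndicator hr C x, lipschitzWith_thickenedIndicator hr C,
    fun x => ⟨NNReal.coe_nonneg _, thickenedIndicator_le_one hr C x⟩,
    fun x hx => by simp [thickenedIndicator_one hr C hx],
    fun x hx => by simp [thickenedIndicator_zero hr C hx]⟩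

namespace QBFL

variable [BorelSpace P] (X : QBFL P μ)

lemma newt_mul_le {η z : P → ℝ} {gη gz : P → ℝ≥0∞} (hη : Measurable η) (hz : Measurable z)
    (hgη : IsUpperGradient (fun x => (η x : EReal)) gη)
    (hgz : IsUpperGradient (fun x => (z x : EReal)) gz) (hη_fin : X.nrmE gη < ⊤)
    (hz_fin : X.nrmE gz < ⊤) {M : ℝ≥0} (hzM : ∀ x, ‖z x‖ₑ ≤ M) :
    X.newt (fun x => ((η x * z x : ℝ) : EReal)) ≤ M * X.nrmE (fun x => ‖η x‖ₑ) +
      X.cc * (X.cc * (X.nrmE (fun x => ‖η x‖ₑ * gz x) + M * X.nrmE gη)) := by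
  rw [newt_eq_nrmE_add_grad, ← X.nrmE_const_mul, ← X.nrmE_const_mul]
  refine add_le_add (X.nrmE_mono fun x => ?_)
    ((X.grad_mul_le hη hz hgη hgz hη_fin hz_fin).trans ?_)
  · rw [ereal_abs_coe, enorm_mul, mul_comm]
    gcongr
    exact hzM x
  · gcongr
    refine (X.nrmE_add_le _ _).trans ?_
    gcongr
    exact X.nrmE_mono fun x => by gcongr; exact hzM x

lemma exists_forall_newt_mul_lt (hAC : X.HasACNorm) {q : P → ℝ} (hq : Measurable q) {M : ℝ≥0}
    (hqM : ∀ x, ‖q x‖ₑ ≤ M) (hfin : X.newt (fun x => (q x : EReal)) < ⊤) {ε : ℝ≥0∞} (hε : 0 < ε) :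
    ∃ δ : ℝ≥0, 0 < δ ∧ ∀ (w : P → ℝ) (ρ : P → ℝ≥0∞), Measurable w → (∀ x, w x ∈ Icc 0 1) →
      IsUpperGradient (fun x => (w x : EReal)) ρ → X.nrmE (fun x => ‖w x‖ₑ) ≤ δ → X.nrmE ρ ≤ δ →
        X.newt (fun x => ((w x * q x : ℝ) : EReal)) < ε := by
  obtain ⟨g, hg, hg_fin⟩ := X.exists_isUpperGradient_nrmE_lt ((X.grad_le_newt _).trans_lt hfin)
  have hC : M + X.cc * (X.cc * (1 + M)) ≠ ⊤ := by finiteness [X.cc_ne_top]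
  obtain ⟨t, ht, htε⟩ := ENNReal.exists_nnreal_pos_mul_lt hC hε.ne'
  obtain ⟨δ, hδ, hδg⟩ := X.exists_forall_nrmE_mul_lt hAC hg.1 hg_fin (ENNReal.coe_pos.2 ht)
  refine ⟨min t δ, lt_min ht hδ, fun w ρ hw hw01 hρ hwδ hρδ => ?_⟩
  have hw1 (x : P) : ‖w x‖ₑ ≤ 1 := by
    rw [Real.enorm_of_nonneg (hw01 x).1, ENNReal.ofReal_le_one]
    exact (hw01 x).2
  have hle_t {s : ℝ≥0∞} (hs : s ≤ (min t δ : ℝ≥0)) : s ≤ t :=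
    hs.trans (by exact_mod_cast min_le_left t δ)
  have hwg := hδg _ (by fun_prop) hw1 (hwδ.trans (by exact_mod_cast min_le_right t δ))
  calc X.newt (fun x => ((w x * q x : ℝ) : EReal))
      ≤ M * X.nrmE (fun x => ‖w x‖ₑ) +
          X.cc * (X.cc * (X.nrmE (fun x => ‖w x‖ₑ * g x) + M * X.nrmE ρ)) :=
        X.newt_mul_le hw hq hρ hg (hρδ.trans_lt ENNReal.coe_lt_top) hg_fin hqM
    _ ≤ M * t + X.cc * (X.cc * (t + M * t)) := by
        gcongr
        exacts [hle_t hwδ, hle_t hρδ]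
    _ = t * (M + X.cc * (X.cc * (1 + M))) := by ring
    _ < ε := htε

end QBFL

/-! ### The closure of the compactly supported Lipschitz functions -/

lemma exists_lipschitzWith_of_hasCompactSupport {α β : Type*} [PseudoMetricSpace α]
    [ProperSpace α] [SeminormedAddCommGroup β] {f : α → β} (hf : LocallyLipschitz f)
    (hc : HasCompactSupport f) : ∃ K, LipschitzWith K f := by
  set N := cthickening 1 (tsupport f)
  have hN : IsCompact N := hc.isCompact.cthickening
  obtain ⟨L, hL⟩ := (hf.locallyLipschitzOn (s := N)).exists_lipschitzOnWith_of_compact hN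
  obtain ⟨B, hB⟩ := hc.exists_bound_of_continuous hf.continuous
  have hfar : ∀ x ∉ N, ∀ y, dist (f x) (f y) ≤ B * dist x y := by
    intro x hx y
    have hfx : f x = 0 := image_eq_zero_of_notMem_tsupport
      fun hx' => hx (self_subset_cthickening _ hx')
    have hB0 : 0 ≤ B := (norm_nonneg _).trans (hB x)
    rw [hfx, dist_zero_left]
    by_cases hy : y ∈ tsupport f
    · have hxy : 1 ≤ dist x y :=
        le_of_not_ge fun h => hx (mem_cthickening_of_dist_le x y 1 _ hy h)
      exact (hB y).trans (le_mul_of_one_le_right hB0 hxy)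
    · rw [image_eq_zero_of_notMem_tsupport hy, norm_zero]
      positivity
  refine ⟨max L B.toNNReal, LipschitzWith.of_dist_le_mul fun x y => ?_⟩
  have hBle : B ≤ (max L B.toNNReal : ℝ≥0) :=
    (Real.le_coe_toNNReal B).trans (by exact_mod_cast le_max_right L B.toNNReal)
  by_cases hx : x ∈ N
  · by_cases hy : y ∈ N
    · exact (hL.dist_le_mul x hx y hy).trans (by gcongr; exact le_max_left _ _)
    · rw [dist_comm, dist_comm x]
      exact (hfar y hy x).trans (by gcongr)
  · exact (hfar x hx y).trans (by gcongr)

namespace QBFL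

variable (X : QBFL P μ)

/-- The closure of `Lip_c(Ω)` in the Newtonian quasi-seminorm: `X.MemClosureLipc Ω u` says that
`u` is approximated by Lipschitz functions with compact support in `Ω`. -/
def MemClosureLipc (Ω : Set P) (u : P → EReal) : Prop :=
  ∀ ε : ℝ≥0∞, 0 < ε → ∃ f : P → ℝ, (∃ K : ℝ≥0, LipschitzWith K f) ∧ HasCompactSupport f ∧
    tsupport f ⊆ Ω ∧ X.newt (fun x => u x - (f x : EReal)) < ε

/-- Density of the locally Lipschitz functions in `N¹X`. -/
def HasDenseLocallyLipschitz : Prop :=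
  ∀ u : P → EReal, X.memN1 u → ∀ ε : ℝ≥0∞, 0 < ε →
    ∃ f : P → ℝ, LocallyLipschitz f ∧ X.newt (fun x => u x - (f x : EReal)) < ε

/-- Characteristic functions of bounded sets belong to `X`. -/
def HasBoundedIndicators : Prop :=
  ∀ A : Set P, MeasurableSet A → Bornology.IsBounded A → X.nrmE (A.indicator 1) < ⊤

variable {X} [BorelSpace P]

lemma memClosureLipc_of_forall_exists {Ω : Set P} {u : P → EReal}
    (h : ∀ ε : ℝ≥0∞, 0 < ε → ∃ v, X.MemClosureLipc Ω v ∧ X.newt (fun x => u x - v x) < ε) :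
    X.MemClosureLipc Ω u := by
  intro ε hε
  obtain ⟨δ, hδ, hδε⟩ := X.exists_pos_cc_mul_add_lt hε
  obtain ⟨v, hv, huv⟩ := h δ (ENNReal.coe_pos.2 hδ)
  obtain ⟨f, hf, hfc, hfΩ, hvf⟩ := hv δ (ENNReal.coe_pos.2 hδ)
  refine ⟨f, hf, hfc, hfΩ, (X.newt_sub_le u v _).trans_lt (lt_of_le_of_lt ?_ hδε)⟩
  gcongr

lemma memClosureLipc_of_tendsto {Ω : Set P} {u : P → EReal} {v : ℕ → P → EReal}
    (hv : ∀ n, X.MemClosureLipc Ω (v n))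
    (h : Tendsto (fun n => X.newt fun x => u x - v n x) atTop (𝓝 0)) : X.MemClosureLipc Ω u :=
  memClosureLipc_of_forall_exists fun _ hε =>
    let ⟨n, hn⟩ := (h.eventually (gt_mem_nhds hε)).exists
    ⟨v n, hv n, hn⟩

lemma exists_cutoff (hB : X.HasBoundedIndicators) {C : Set P} (hC : Bornology.IsBounded C) {r : ℝ}
    (hr : 0 < r) :
    ∃ η : P → ℝ, LipschitzWith r.toNNReal⁻¹ η ∧ (∀ x, η x ∈ Icc 0 1) ∧ (∀ x ∈ C, η x = 1) ∧
      (∀ x ∉ thickening r C, η x = 0) ∧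
      ∃ g, IsUpperGradient (fun x => (η x : EReal)) g ∧ X.nrmE g < ⊤ ∧
        (∀ x, g x ≤ (r.toNNReal⁻¹ : ℝ≥0)) ∧ ∀ x ∈ C, g x = 0 := by
  obtain ⟨η, hη, h01, h1, h0⟩ := exists_lipschitzWith_cutoff C hr
  refine ⟨η, hη, h01, h1, h0, _, isUpperGradient_indicator_of_lipschitzWith hη h01, ?_,
    fun x => indicator_le_self' (fun _ _ => zero_le) x,
    fun x hx => indicator_of_notMem (fun h => h.2.ne (h1 x hx)) _⟩
  calc _ ≤ X.nrmE fun x => (r.toNNReal⁻¹ : ℝ≥0) * (thickening r C).indicator 1 x := by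
        refine X.nrmE_mono (indicator_le fun x hx => ?_)
        simp [not_imp_comm.1 (h0 x) hx.1.ne']
    _ < ⊤ := by
        rw [X.nrmE_const_mul]
        exact ENNReal.mul_lt_top ENNReal.coe_lt_top
          (hB _ isOpen_thickening.measurableSet hC.thickening)

lemma exists_locallyLipschitz_newt_sub_lt (hD : X.HasDenseLocallyLipschitz)
    (hB : X.HasBoundedIndicators) {b : P → ℝ} (hb : Measurable b)
    (hfin : X.newt (fun x => (b x : EReal)) < ⊤) {C : Set P} (hC : Bornology.IsBounded C)
    (hb0 : ∀ x ∉ C, b x = 0) {r : ℝ} (hr : 0 < r) {ε : ℝ≥0∞} (hε : 0 < ε) :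
    ∃ f : P → ℝ, LocallyLipschitz f ∧ (∀ x ∉ thickening r C, f x = 0) ∧
      X.newt (fun x => (b x : EReal) - f x) < ε := by
  obtain ⟨η, hη, hη01, hη1, hη0, gη, hgη, hgη_fin, hgηK, -⟩ := exists_cutoff hB hC hr
  set K := r.toNNReal⁻¹
  have hη_enorm (x : P) : ‖η x‖ₑ ≤ (1 : ℝ≥0) := by
    rw [Real.enorm_of_nonneg (hη01 x).1]
    exact ENNReal.ofReal_le_one.2 (hη01 x).2
  have hconst : 1 + X.cc * (X.cc * (K + 1)) ≠ ⊤ := by finiteness [X.cc_ne_top]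
  obtain ⟨δ, hδ, hδε⟩ := ENNReal.exists_nnreal_pos_mul_lt hconst hε.ne'
  obtain ⟨f, hf, hbf⟩ := hD _ ⟨hb.coe_real_ereal, hfin⟩ δ (ENNReal.coe_pos.2 hδ)
  simp only [← EReal.coe_sub] at hbf
  obtain ⟨g, hg, hgδ⟩ := X.exists_isUpperGradient_nrmE_lt ((X.grad_le_newt _).trans_lt hbf)
  have hzδ := (X.nrmE_abs_le_newt _).trans hbf.le
  simp only [ereal_abs_coe] at hzδ
  refine ⟨fun x => η x * f x, ?_, fun x hx => by simp [hη0 x hx], ?_⟩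
  · exact (contDiff_mul (n := 1) (𝕜 := ℝ)).locallyLipschitz.comp (hη.locallyLipschitz.prodMk hf)
  have heq (x : P) : (b x : EReal) - (η x * f x : ℝ) = (((b x - f x) * η x : ℝ) : EReal) := by
    rw [← EReal.coe_sub]
    by_cases hx : x ∈ C
    · simp [hη1 x hx]
    · simp [hb0 x hx, mul_comm]
  calc X.newt (fun x => (b x : EReal) - (η x * f x : ℝ))
      = X.newt (fun x => (((b x - f x) * η x : ℝ) : EReal)) := by simp only [heq]
    _ ≤ (1 : ℝ≥0) * X.nrmE (fun x => ‖b x - f x‖ₑ) +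
          X.cc * (X.cc * (X.nrmE (fun x => ‖b x - f x‖ₑ * gη x) + (1 : ℝ≥0) * X.nrmE g)) :=
        X.newt_mul_le (hb.sub hf.continuous.measurable) hη.continuous.measurable hg hgη
          (hgδ.trans ENNReal.coe_lt_top) hgη_fin hη_enorm
    _ ≤ (1 : ℝ≥0) * δ + X.cc * (X.cc * (K * δ + (1 : ℝ≥0) * δ)) := by
        gcongr
        calc _ ≤ X.nrmE fun x => K * ‖b x - f x‖ₑ :=
              X.nrmE_mono fun x => by rw [mul_comm]; gcongr; exact hgηK x
          _ ≤ K * δ := by rw [X.nrmE_const_mul]; gcongr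
    _ = δ * (1 + X.cc * (X.cc * (K + 1))) := by rw [ENNReal.coe_one]; ring
    _ < ε := hδε

lemma memClosureLipc_of_isCompact [ProperSpace P] (hD : X.HasDenseLocallyLipschitz)
    (hB : X.HasBoundedIndicators) {Ω : Set P} (hΩ : IsOpen Ω) {b : P → ℝ} (hb : Measurable b)
    (hfin : X.newt (fun x => (b x : EReal)) < ⊤) {C : Set P} (hC : IsCompact C) (hCΩ : C ⊆ Ω)
    (hb0 : ∀ x ∉ C, b x = 0) : X.MemClosureLipc Ω fun x => b x := by
  intro ε hε
  obtain ⟨r, hr, hrΩ⟩ := hC.exists_cthickening_subset_open hΩ hCΩ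
  obtain ⟨f, hf, hf0, hbf⟩ :=
    exists_locallyLipschitz_newt_sub_lt hD hB hb hfin hC.isBounded hb0 hr hε
  have hsub : tsupport f ⊆ cthickening r C := closure_minimal
    (fun x hx => thickening_subset_cthickening r C (not_imp_comm.1 (hf0 x) hx)) isClosed_cthickening
  have hfc : HasCompactSupport f := hC.cthickening.of_isClosed_subset (isClosed_tsupport f) hsub
  exact ⟨f, exists_lipschitzWith_of_hasCompactSupport hf hfc, hfc, hsub.trans hrΩ, hbf⟩

end QBFL

/-! ### Truncations -/

/-- The truncation `max (-r) (min r a)` of an extended real number at height `r`, as a real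
number. -/
def truncate (r : ℝ≥0) (a : EReal) : ℝ := (clamp (-(r : ℝ) : EReal) (r : ℝ) a).toReal

lemma clamp_coe (lo hi y : ℝ) : clamp (lo : EReal) hi y = (clamp lo hi y : ℝ) := by
  simp only [clamp, EReal.coe_strictMono.monotone.map_max, EReal.coe_strictMono.monotone.map_min]

lemma truncate_coe (r : ℝ≥0) (y : ℝ) : truncate r y = clamp (-(r : ℝ)) r y := by
  rw [truncate, ← EReal.coe_neg, clamp_coe, EReal.toReal_coe]

lemma truncate_top (r : ℝ≥0) : truncate r ⊤ = r := by
  have h : (-(r : ℝ) : EReal) ≤ (r : ℝ) := by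
    rw [← EReal.coe_neg, EReal.coe_le_coe_iff]
    exact neg_le_self r.coe_nonneg
  rw [truncate, clamp, min_top_right, max_eq_right h, EReal.toReal_coe]

lemma truncate_bot (r : ℝ≥0) : truncate r ⊥ = -r := by
  rw [truncate, clamp, min_bot_right, max_bot_right, ← EReal.coe_neg, EReal.toReal_coe]

lemma measurable_truncate (r : ℝ≥0) : Measurable (truncate r) :=
  (measurable_const.max (measurable_const.min measurable_id)).ereal_toReal

lemma truncate_zero (r : ℝ≥0) : truncate r 0 = 0 := by
  rw [← EReal.coe_zero, truncate_coe]
  exact clamp_eq_self ⟨neg_nonpos.2 r.coe_nonneg, r.coe_nonneg⟩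

lemma enorm_truncate_le (r : ℝ≥0) (a : EReal) : ‖truncate r a‖ₑ ≤ r := by
  suffices |truncate r a| ≤ r by
    rw [Real.enorm_eq_ofReal_abs]
    exact (ENNReal.ofReal_le_ofReal this).trans_eq ENNReal.ofReal_coe_nnreal
  have hr := r.coe_nonneg
  induction a with
  | bot => simp [truncate_bot]
  | coe y => rw [truncate_coe, clamp]; grind
  | top => simp [truncate_top]

lemma enorm_truncate_sub_truncate_le (r : ℝ≥0) (a a' : EReal) :
    ‖truncate r a - truncate r a'‖ₑ ≤ (a - a').abs := by
  by_cases h : (a - a').abs = ⊤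
  · exact h ▸ le_top
  obtain ⟨x, y, rfl, rfl⟩ := exists_coe_of_ereal_abs_sub_ne_top h
  rw [ereal_abs_coe_sub_coe, truncate_coe, truncate_coe, enorm_le_iff_norm_le, Real.norm_eq_abs,
    Real.norm_eq_abs, clamp, clamp]
  grind

lemma ereal_coe_lt_abs_iff {r : ℝ≥0} {a : EReal} :
    (r : ℝ≥0∞) < a.abs ↔ a < -(r : ℝ) ∨ (r : ℝ) < a := by
  induction a with
  | bot => simp [← EReal.coe_neg, EReal.bot_lt_coe]
  | top => simp
  | coe y =>
    rw [EReal.abs_def, ENNReal.coe_lt_ofReal, lt_abs, lt_neg, ← EReal.coe_neg, EReal.coe_lt_coe_iff,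
      EReal.coe_lt_coe_iff, or_comm]

lemma ereal_abs_lt_coe_iff {r : ℝ≥0} {a : EReal} :
    a.abs < r ↔ -(r : ℝ) < a ∧ a < (r : ℝ) := by
  induction a with
  | bot => simp
  | top => simp
  | coe y =>
    rw [EReal.abs_def, ENNReal.ofReal_lt_coe_iff (abs_nonneg y), abs_lt, ← EReal.coe_neg,
      EReal.coe_lt_coe_iff, EReal.coe_lt_coe_iff]

lemma ereal_abs_sub_truncate_le (r : ℝ≥0) (a : EReal) : (a - truncate r a).abs ≤ a.abs := by
  induction a with
  | bot => simp
  | top => simp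
  | coe y =>
    have hr := r.coe_nonneg
    rw [ereal_abs_coe_sub_coe, ereal_abs_coe, truncate_coe, clamp, enorm_le_iff_norm_le,
      Real.norm_eq_abs, Real.norm_eq_abs]
    grind

lemma coe_truncate_of_abs_le {r : ℝ≥0} {a : EReal} (h : a.abs ≤ r) :
    (truncate r a : EReal) = a := by
  rw [← not_lt, ereal_coe_lt_abs_iff, not_or, not_lt, not_lt, ← EReal.coe_neg] at h
  lift a to ℝ using ⟨ne_top_of_le_ne_top (EReal.coe_ne_top _) h.2,
    ne_bot_of_le_ne_bot (EReal.coe_ne_bot _) h.1⟩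
  rw [truncate_coe, clamp_eq_self ⟨EReal.coe_le_coe_iff.1 h.1, EReal.coe_le_coe_iff.1 h.2⟩]

lemma enorm_sub_truncate_sub_le (r : ℝ≥0) (x y : ℝ) :
    ‖(x - truncate r x) - (y - truncate r y)‖ₑ ≤ ‖x - y‖ₑ := by
  have hr := r.coe_nonneg
  rw [enorm_le_iff_norm_le, Real.norm_eq_abs, Real.norm_eq_abs, truncate_coe, truncate_coe, clamp,
    clamp]
  grind

lemma truncate_eq_add {r : ℝ≥0} {a : EReal} {p q : ℝ} (hp : clamp (-(r : ℝ) : EReal) 0 a = p)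
    (hq : clamp (0 : EReal) (r : ℝ) a = q) : truncate r a = p + q := by
  have hr := r.coe_nonneg
  rw [← EReal.coe_neg] at hp
  induction a with
  | bot =>
    simp only [clamp, min_bot_right, max_bot_right, EReal.coe_eq_coe_iff] at hp hq
    rw [truncate_bot, ← hp, EReal.coe_eq_zero.1 hq.symm, add_zero]
  | top =>
    simp only [clamp, min_top_right] at hp hq
    rw [max_eq_right (by simp)] at hp hq
    rw [truncate_top, EReal.coe_eq_zero.1 hp.symm, zero_add, EReal.coe_eq_coe_iff.1 hq]
  | coe y =>
    rw [← EReal.coe_zero, clamp_coe, EReal.coe_eq_coe_iff] at hp hq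
    rw [truncate_coe]
    unfold clamp at *
    grind

lemma sub_truncate_eq_add {r : ℝ≥0} {a : EReal} {p q : ℝ} (hp : clamp ⊥ (-(r : ℝ) : EReal) a = p)
    (hq : clamp ((r : ℝ) : EReal) ⊤ a = q) : a - truncate r a = (p + q : ℝ) := by
  have hr := r.coe_nonneg
  induction a with
  | bot => simp [clamp] at hp
  | top => simp [clamp] at hq
  | coe y =>
    rw [← EReal.coe_neg, clamp, max_bot_left, ← EReal.coe_strictMono.monotone.map_min,
      EReal.coe_eq_coe_iff] at hp
    rw [clamp, min_top_left, ← EReal.coe_strictMono.monotone.map_max, EReal.coe_eq_coe_iff] at hq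
    rw [truncate_coe, ← EReal.coe_sub, EReal.coe_eq_coe_iff, clamp]
    grind

lemma exists_clamp_eq_coe {lo hi : ℝ} (h : lo ≤ hi) (a : EReal) :
    ∃ p : ℝ, clamp (lo : EReal) hi a = p := by
  induction a with
  | bot => exact ⟨lo, by simp [clamp]⟩
  | top => exact ⟨hi, by simp [clamp, h]⟩
  | coe y => exact ⟨_, clamp_coe lo hi y⟩

lemma ereal_abs_truncate_sub_truncate_le (r : ℝ≥0) (a a' : EReal) :
    ((truncate r a : EReal) - truncate r a').abs ≤
      (clamp (-(r : ℝ) : EReal) 0 a - clamp (-(r : ℝ) : EReal) 0 a').abs +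
        (clamp 0 ((r : ℝ) : EReal) a - clamp 0 ((r : ℝ) : EReal) a').abs := by
  have hneg (a : EReal) : ∃ p : ℝ, clamp (-(r : ℝ) : EReal) 0 a = p :=
    exists_clamp_eq_coe (neg_nonpos.2 r.coe_nonneg) a
  have hpos (a : EReal) : ∃ q : ℝ, clamp 0 ((r : ℝ) : EReal) a = q :=
    exists_clamp_eq_coe r.coe_nonneg a
  obtain ⟨⟨p, hp⟩, q, hq⟩ := hneg a, hpos a
  obtain ⟨⟨p', hp'⟩, q', hq'⟩ := hneg a', hpos a'
  rw [hp, hq, hp', hq', truncate_eq_add hp hq, truncate_eq_add hp' hq', ereal_abs_coe_sub_coe,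
    ereal_abs_coe_sub_coe, ereal_abs_coe_sub_coe]
  simpa only [edist_eq_enorm_sub] using edist_add_add_le p q p' q'

lemma ereal_abs_sub_truncate_sub_sub_truncate_le (r : ℝ≥0) (a a' : EReal) :
    (a - truncate r a - (a' - truncate r a')).abs ≤
      (clamp ⊥ (-(r : ℝ) : EReal) a - clamp ⊥ (-(r : ℝ) : EReal) a').abs +
        (clamp ((r : ℝ) : EReal) ⊤ a - clamp ((r : ℝ) : EReal) ⊤ a').abs := by
  by_cases h : (clamp ⊥ (-(r : ℝ) : EReal) a - clamp ⊥ (-(r : ℝ) : EReal) a').abs = ⊤ ∨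
      (clamp ((r : ℝ) : EReal) ⊤ a - clamp ((r : ℝ) : EReal) ⊤ a').abs = ⊤
  · exact le_top.trans_eq (ENNReal.add_eq_top.2 h).symm
  push Not at h
  obtain ⟨p, p', hp, hp'⟩ := exists_coe_of_ereal_abs_sub_ne_top h.1
  obtain ⟨q, q', hq, hq'⟩ := exists_coe_of_ereal_abs_sub_ne_top h.2
  rw [sub_truncate_eq_add hp hq, sub_truncate_eq_add hp' hq', hp, hq, hp', hq',
    ereal_abs_coe_sub_coe, ereal_abs_coe_sub_coe, ereal_abs_coe_sub_coe]
  simpa only [edist_eq_enorm_sub] using edist_add_add_le p q p' q'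

namespace QBFL

variable [BorelSpace P] (X : QBFL P μ)

lemma grad_truncate_le {u : P → EReal} (hu : Measurable u) {g : P → ℝ≥0∞}
    (hg : IsUpperGradient u g) (hfin : X.nrmE g < ⊤) (r : ℝ≥0) :
    X.grad (fun x => truncate r (u x)) ≤
      2 * X.cc ^ 2 * X.nrmE ({x | u x ≠ 0 ∧ (u x).abs < r}.indicator g) := by
  set N := X.nrmE ({x | u x ≠ 0 ∧ (u x).abs < r}.indicator g)
  have hneg : X.grad (fun x => clamp (-(r : ℝ)) 0 (u x)) ≤ X.cc * N := by
    refine (X.grad_clamp_le hu hg hfin (EReal.coe_ne_top (-r)) EReal.zero_ne_bot).trans ?_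
    gcongr
    refine X.nrmE_mono (indicator_le_indicator_of_subset (fun x hx => ?_) fun _ => zero_le)
    exact ⟨hx.2.ne, ereal_abs_lt_coe_iff.2 ⟨hx.1, hx.2.trans_le (by simp)⟩⟩
  have hpos : X.grad (fun x => clamp 0 (r : ℝ) (u x)) ≤ X.cc * N := by
    refine (X.grad_clamp_le hu hg hfin EReal.zero_ne_top (EReal.coe_ne_bot r)).trans ?_
    gcongr
    refine X.nrmE_mono (indicator_le_indicator_of_subset (fun x hx => ?_) fun _ => zero_le)
    exact ⟨hx.1.ne', ereal_abs_lt_coe_iff.2 ⟨hx.1.trans_le' (by simp), hx.2⟩⟩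
  calc X.grad (fun x => truncate r (u x))
      ≤ X.cc * (X.grad (fun x => clamp (-(r : ℝ)) 0 (u x)) +
          X.grad (fun x => clamp 0 (r : ℝ) (u x))) :=
        X.grad_le_of_abs_sub_le fun x y => ereal_abs_truncate_sub_truncate_le r (u x) (u y)
    _ ≤ X.cc * (X.cc * N + X.cc * N) := by gcongr
    _ = 2 * X.cc ^ 2 * N := by ring

lemma grad_sub_truncate_le {u : P → EReal} (hu : Measurable u) {g : P → ℝ≥0∞}
    (hg : IsUpperGradient u g) (hfin : X.nrmE g < ⊤) (r : ℝ≥0) :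
    X.grad (fun x => u x - truncate r (u x)) ≤
      2 * X.cc ^ 2 * X.nrmE ({x | r < (u x).abs}.indicator g) := by
  set N := X.nrmE ({x | r < (u x).abs}.indicator g)
  have hneg : X.grad (fun x => clamp ⊥ (-(r : ℝ)) (u x)) ≤ X.cc * N := by
    refine (X.grad_clamp_le hu hg hfin bot_ne_top (EReal.coe_ne_bot (-r))).trans ?_
    gcongr
    exact X.nrmE_mono (indicator_le_indicator_of_subset
      (fun x hx => ereal_coe_lt_abs_iff.2 (Or.inl hx.2)) fun _ => zero_le)
  have hpos : X.grad (fun x => clamp (r : ℝ) ⊤ (u x)) ≤ X.cc * N := by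
    refine (X.grad_clamp_le hu hg hfin (EReal.coe_ne_top r) top_ne_bot).trans ?_
    gcongr
    exact X.nrmE_mono (indicator_le_indicator_of_subset
      (fun x hx => ereal_coe_lt_abs_iff.2 (Or.inr hx.1)) fun _ => zero_le)
  calc X.grad (fun x => u x - truncate r (u x))
      ≤ X.cc * (X.grad (fun x => clamp ⊥ (-(r : ℝ)) (u x)) +
          X.grad (fun x => clamp (r : ℝ) ⊤ (u x))) :=
        X.grad_le_of_abs_sub_le fun x y => ereal_abs_sub_truncate_sub_sub_truncate_le r (u x) (u y)
    _ ≤ X.cc * (X.cc * N + X.cc * N) := by gcongr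
    _ = 2 * X.cc ^ 2 * N := by ring

end QBFL

/-! ### Functions vanishing outside an open set -/

lemma QBFL.newt_sub_truncate_le (X : QBFL P μ) (b : P → ℝ) (e : ℝ≥0) :
    X.newt (fun x => ((b x - truncate e (b x) : ℝ) : EReal)) ≤ X.newt fun x => (b x : EReal) := by
  refine X.newt_mono (fun x => ?_) fun x y => ?_
  · simpa only [EReal.coe_sub] using ereal_abs_sub_truncate_le e (b x)
  · simpa only [ereal_abs_coe_sub_coe] using enorm_sub_truncate_sub_le e (b x) (b y)

namespace QBFL

variable [BorelSpace P] {X : QBFL P μ}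

lemma tendsto_newt_truncate (X : QBFL P μ) (hAC : X.HasACNorm) {u : P → EReal} (hu : Measurable u)
    (hfin : X.newt u < ⊤) {K : Set P} (hK : X.nrmE (K.indicator 1) < ⊤) (huK : ∀ x ∉ K, u x = 0)
    {r : ℕ → ℝ≥0} (hr : Antitone r) (hr0 : Tendsto r atTop (𝓝 0)) :
    Tendsto (fun n => X.newt fun x => truncate (r n) (u x)) atTop (𝓝 0) := by
  obtain ⟨g, hg, hg_fin⟩ := X.exists_isUpperGradient_nrmE_lt ((X.grad_le_newt _).trans_lt hfin)
  set E : ℕ → Set P := fun n => {x | u x ≠ 0 ∧ (u x).abs < r n}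
  have hE (n : ℕ) : MeasurableSet (E n) := (hu (measurableSet_singleton 0).compl).inter
    (measurableSet_lt (measurable_ereal_abs.comp hu) measurable_const)
  have hE_anti : Antitone E := fun m n hmn x hx =>
    ⟨hx.1, hx.2.trans_le (ENNReal.coe_le_coe.2 (hr hmn))⟩
  have hE_empty : ⋂ n, E n = ∅ := by
    refine eq_empty_of_forall_notMem fun x hx => ?_
    rw [mem_iInter] at hx
    have hle : (u x).abs ≤ (0 : ℝ≥0) :=
      ge_of_tendsto' (ENNReal.tendsto_coe.2 hr0) fun n => (hx n).2.le
    exact (hx 0).1 (by simpa using hle)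
  have hgE := X.tendsto_nrmE_indicator hAC hg.1 hg_fin hE hE_anti (by rw [hE_empty, measure_empty])
  have hle (n : ℕ) : X.newt (fun x => truncate (r n) (u x)) ≤
      r n * X.nrmE (K.indicator 1) + 2 * X.cc ^ 2 * X.nrmE ((E n).indicator g) := by
    rw [newt_eq_nrmE_add_grad, ← X.nrmE_const_mul]
    refine add_le_add (X.nrmE_mono fun x => ?_) (X.grad_truncate_le hu hg hg_fin (r n))
    by_cases hx : x ∈ K
    · simpa [hx, ereal_abs_coe] using enorm_truncate_le (r n) (u x)
    · simp [huK x hx, truncate_zero]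
  have hcc : 2 * X.cc ^ 2 ≠ ⊤ := by finiteness [X.cc_ne_top]
  have hlim := (ENNReal.Tendsto.mul_const (ENNReal.tendsto_coe.2 hr0) (Or.inr hK.ne)).add
    (ENNReal.Tendsto.const_mul hgE (Or.inr hcc))
  rw [ENNReal.coe_zero, zero_mul, mul_zero, add_zero] at hlim
  exact tendsto_of_tendsto_of_tendsto_of_le_of_le tendsto_const_nhds hlim (fun _ => zero_le) hle

lemma tendsto_newt_sub_truncate (X : QBFL P μ) (hAC : X.HasACNorm) {u : P → EReal}
    (hu : Measurable u) (hfin : X.newt u < ⊤) {r : ℕ → ℝ≥0} (hr : Monotone r)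
    (hr_top : Tendsto r atTop atTop) :
    Tendsto (fun n => X.newt fun x => u x - truncate (r n) (u x)) atTop (𝓝 0) := by
  obtain ⟨g, hg, hg_fin⟩ := X.exists_isUpperGradient_nrmE_lt ((X.grad_le_newt _).trans_lt hfin)
  have hu_abs : Measurable fun x => (u x).abs := measurable_ereal_abs.comp hu
  have hu_fin := (X.nrmE_abs_le_newt u).trans_lt hfin
  set E : ℕ → Set P := fun n => {x | r n < (u x).abs}
  have hE (n : ℕ) : MeasurableSet (E n) := measurableSet_lt measurable_const hu_abs
  have hE_anti : Antitone E := fun m n hmn x hx => (ENNReal.coe_le_coe.2 (hr hmn)).trans_lt hx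
  have hE_null : μ (⋂ n, E n) = 0 := by
    refine measure_mono_null (fun x hx => ?_) (X.ae_lt_top_of_nrmE_lt_top hu_abs hu_fin)
    have hx' (n : ℕ) : r n < (u x).abs := mem_iInter.1 hx n
    exact (le_of_tendsto' (tendsto_coe_nhds_top.2 hr_top) fun n => (hx' n).le).not_gt
  have huE := X.tendsto_nrmE_indicator hAC hu_abs hu_fin hE hE_anti hE_null
  have hgE := X.tendsto_nrmE_indicator hAC hg.1 hg_fin hE hE_anti hE_null
  have hle (n : ℕ) : X.newt (fun x => u x - truncate (r n) (u x)) ≤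
      X.nrmE ((E n).indicator fun x => (u x).abs) +
        2 * X.cc ^ 2 * X.nrmE ((E n).indicator g) := by
    rw [newt_eq_nrmE_add_grad]
    refine add_le_add (X.nrmE_mono fun x => ?_) (X.grad_sub_truncate_le hu hg hg_fin (r n))
    by_cases hx : x ∈ E n
    · simpa only [indicator_of_mem hx] using ereal_abs_sub_truncate_le (r n) (u x)
    · have hxr : (truncate (r n) (u x) : EReal) = u x := coe_truncate_of_abs_le (not_lt.1 hx)
      have h0 : (u x - truncate (r n) (u x)).abs = 0 := by
        rw [hxr, ← hxr, ereal_abs_coe_sub_coe, _root_.sub_self, enorm_zero]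
      exact h0.trans_le zero_le
  have hcc : 2 * X.cc ^ 2 ≠ ⊤ := by finiteness [X.cc_ne_top]
  have hlim := huE.add (ENNReal.Tendsto.const_mul hgE (Or.inr hcc))
  rw [mul_zero, add_zero] at hlim
  exact tendsto_of_tendsto_of_tendsto_of_le_of_le tendsto_const_nhds hlim (fun _ => zero_le) hle

lemma newt_mul_le_nrmE_indicator_compl (X : QBFL P μ) {ζ b : P → ℝ} {h g : P → ℝ≥0∞}
    (hζ : Measurable ζ) (hb : Measurable b) (hh : IsUpperGradient (fun x => (ζ x : EReal)) h)
    (hg : IsUpperGradient (fun x => (b x : EReal)) g) (hh_fin : X.nrmE h < ⊤)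
    (hg_fin : X.nrmE g < ⊤) (hζ1 : ∀ x, ‖ζ x‖ₑ ≤ 1) {L : ℝ≥0∞} (hhL : ∀ x, h x ≤ L) {C : Set P}
    (hζC : ∀ x ∈ C, ζ x = 0) (hhC : ∀ x ∈ C, h x = 0) :
    X.newt (fun x => ((ζ x * b x : ℝ) : EReal)) ≤ X.nrmE (Cᶜ.indicator fun x => ‖b x‖ₑ) +
      X.cc * X.nrmE (Cᶜ.indicator fun x => g x + ‖b x‖ₑ * L) := by
  rw [newt_eq_nrmE_add_grad]
  refine add_le_add (X.nrmE_mono fun x => ?_) ((X.grad_mul_le hζ hb hh hg hh_fin hg_fin).trans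
    (mul_le_mul_right (X.nrmE_mono fun x => ?_) _))
  · by_cases hx : x ∈ C
    · simp [hζC x hx]
    · rw [indicator_of_mem (mem_compl hx), ereal_abs_coe, enorm_mul]
      exact mul_le_of_le_one_left' (hζ1 x)
  · by_cases hx : x ∈ C
    · simp [hζC x hx, hhC x hx]
    · rw [indicator_of_mem (mem_compl hx)]
      gcongr
      exacts [mul_le_of_le_one_left' (hζ1 x), hhL x]

lemma exists_continuous_exists_isClosed [ProperSpace P] [IsLocallyFiniteMeasure μ]
    (hAC : X.HasACNorm) (hB : X.HasBoundedIndicators) (hD : X.HasDenseLocallyLipschitz)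
    {b : P → ℝ} (hb : Measurable b) (hfin : X.newt (fun x => (b x : EReal)) < ⊤) {C : Set P}
    (hC : Bornology.IsBounded C) (hb0 : ∀ x ∉ C, b x = 0) {a : ℝ≥0} (ha : 0 < a) {ε : ℝ≥0∞}
    (hε : 0 < ε) :
    ∃ (f : P → ℝ) (F : Set P) (w : P → ℝ) (ρ : P → ℝ≥0∞), Continuous f ∧ IsClosed F ∧
      (∀ x ∈ F, |b x - f x| ≤ a) ∧ Measurable w ∧ (∀ x, w x ∈ Icc 0 1) ∧
      (∀ x ∉ F, w x = 1) ∧ IsUpperGradient (fun x => (w x : EReal)) ρ ∧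
      X.nrmE (fun x => ‖w x‖ₑ) ≤ ε ∧ X.nrmE ρ ≤ ε := by
  obtain ⟨δ, hδ, hδε⟩ := X.exists_pos_cc_mul_add_lt hε
  obtain ⟨t, ht, htδ⟩ :=
    ENNReal.exists_nnreal_pos_mul_lt (ENNReal.coe_ne_top (r := a⁻¹)) (ENNReal.coe_ne_zero.2 hδ.ne')
  obtain ⟨f, hf, hf0, hbf⟩ := exists_locallyLipschitz_newt_sub_lt hD hB hb hfin hC hb0 one_pos
    (ENNReal.coe_pos.2 ht)
  obtain ⟨g, hg, hgt⟩ := X.exists_isUpperGradient_nrmE_lt ((X.grad_le_newt _).trans_lt hbf)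
  have hV : Bornology.IsBounded (thickening 1 C) := hC.thickening
  have hz0 : ∀ x ∉ thickening 1 C, (b x : EReal) - f x = 0 := fun x hx => by
    simp [hb0 x fun h => hx (self_subset_thickening one_pos C h), hf0 x hx]
  obtain ⟨F, w, ρ, hF, hFz, hw, hw01, hw1, hρ, hwδ, hρδ⟩ := X.exists_isClosed_mul_abs_le_one hAC
    isOpen_thickening hV.measure_lt_top.ne (hB _ isOpen_thickening.measurableSet hV)
    (z := fun x => (b x : EReal) - f x)
    (hb.coe_real_ereal.sub hf.continuous.measurable.coe_real_ereal) hz0 hg a⁻¹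
    (ENNReal.coe_pos.2 hδ)
  have hFa : ∀ x ∈ F, |b x - f x| ≤ a := fun x hx => by
    have h := hFz x hx
    rwa [ereal_abs_coe_sub_coe, ENNReal.coe_inv ha.ne', mul_comm, ← div_eq_mul_inv,
      ENNReal.div_le_iff (ENNReal.coe_ne_zero.2 ha.ne') ENNReal.coe_ne_top, one_mul,
      Real.enorm_eq_ofReal_abs, ENNReal.ofReal_le_coe] at h
  have hle {s : ℝ≥0∞} (hs : s ≤ t) : X.cc * ((a⁻¹ : ℝ≥0) * s + δ) ≤ ε := by
    refine le_trans ?_ hδε.le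
    gcongr
    exact (mul_comm _ _).trans_le ((mul_le_mul_left hs _).trans htδ.le)
  exact ⟨f, F, w, ρ, hf.continuous, hF, hFa, hw, hw01, hw1, hρ,
    hwδ.trans (hle ((X.nrmE_abs_le_newt _).trans hbf.le)), hρδ.trans (hle hgt.le)⟩

lemma exists_isCompact_subset_support [ProperSpace P] [IsLocallyFiniteMeasure μ]
    (hAC : X.HasACNorm) (hB : X.HasBoundedIndicators) (hD : X.HasDenseLocallyLipschitz)
    {b : P → ℝ} (hb : Measurable b) (hfin : X.newt (fun x => (b x : EReal)) < ⊤) {K : Set P}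
    (hK : IsCompact K) (hbK : ∀ x ∉ K, b x = 0) {e : ℝ≥0} (he : 0 < e) {ε : ℝ≥0∞} (hε : 0 < ε) :
    ∃ (C : Set P) (w : P → ℝ) (ρ : P → ℝ≥0∞), IsCompact C ∧ (∀ x ∈ C, b x ≠ 0) ∧
      Measurable w ∧ (∀ x, w x ∈ Icc 0 1) ∧ (∀ x ∉ C, e < |b x| → w x = 1) ∧
      IsUpperGradient (fun x => (w x : EReal)) ρ ∧
      X.nrmE (fun x => ‖w x‖ₑ) ≤ ε ∧ X.nrmE ρ ≤ ε := by
  obtain ⟨f, F, w, ρ, hf, hF, hFf, hw, hw01, hw1, hρ⟩ :=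
    exists_continuous_exists_isClosed hAC hB hD hb hfin hK.isBounded hbK
      (show 0 < e / 3 by positivity) hε
  have hdist : ∀ x ∈ F, |b x| ≤ |f x| + e / 3 ∧ |f x| ≤ |b x| + e / 3 := fun x hx => by
    have h : |b x - f x| ≤ e / 3 := hFf x hx
    constructor <;> grind
  set C := F ∩ {x | 2 * (e / 3) ≤ |f x|}
  have hC : IsClosed C := hF.inter (isClosed_le continuous_const hf.abs)
  have hCb : ∀ x ∈ C, b x ≠ 0 := fun x hx hbx => by
    have hfx : 2 * (e / 3) ≤ |f x| := hx.2
    have := (hdist x hx.1).2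
    rw [hbx, abs_zero] at this
    linarith [NNReal.coe_pos.2 he]
  refine ⟨C, w, ρ, hK.of_isClosed_subset hC fun x hx => not_imp_comm.1 (hbK x) (hCb x hx), hCb,
    hw, hw01, fun x hx hxe => hw1 x fun hxF => ?_, hρ⟩
  have hfx : |f x| < 2 * (e / 3) := not_le.1 fun h => hx ⟨hxF, h⟩
  linarith [hdist x hxF]

lemma memClosureLipc_of_eq_zero_of_abs_le [ProperSpace P] [IsLocallyFiniteMeasure μ]
    (hAC : X.HasACNorm) (hB : X.HasBoundedIndicators) (hD : X.HasDenseLocallyLipschitz)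
    {Ω : Set P} (hΩ : IsOpen Ω) {b : P → ℝ} (hb : Measurable b)
    (hb_fin : X.newt (fun x => (b x : EReal)) < ⊤) {K : Set P} (hK : IsCompact K)
    (hbK : ∀ x ∉ K, b x = 0) (hbΩ : ∀ x ∉ Ω, b x = 0) {e : ℝ≥0} (he : 0 < e) {q : P → ℝ}
    (hq : Measurable q) {M : ℝ≥0} (hqM : ∀ x, ‖q x‖ₑ ≤ M)
    (hq_fin : X.newt (fun x => (q x : EReal)) < ⊤) (hqb : ∀ x, |b x| ≤ e → q x = 0) :
    X.MemClosureLipc Ω fun x => q x := by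
  refine memClosureLipc_of_forall_exists fun ε hε => ?_
  obtain ⟨δ, hδ, hδε⟩ := X.exists_forall_newt_mul_lt hAC hq hqM hq_fin hε
  obtain ⟨C, w, ρ, hC, hCb, hw, hw01, hw1, hρ, hwδ, hρδ⟩ :=
    exists_isCompact_subset_support hAC hB hD hb hb_fin hK hbK he (ENNReal.coe_pos.2 hδ)
  have hwq : X.newt (fun x => ((w x * q x : ℝ) : EReal)) < ε := hδε w ρ hw hw01 hρ hwδ hρδ
  have hsub (x : P) : (q x : EReal) - ((1 - w x) * q x : ℝ) = (w x * q x : ℝ) := by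
    rw [← EReal.coe_sub, EReal.coe_eq_coe_iff]
    ring
  have hq_off : ∀ x ∉ C, (1 - w x) * q x = 0 := fun x hx => by
    rcases le_or_gt |b x| e with hbx | hbx
    · rw [hqb x hbx, mul_zero]
    · rw [hw1 x hx hbx, sub_self, zero_mul]
  refine ⟨fun x => ((1 - w x) * q x : ℝ), ?_, by simpa only [hsub] using hwq⟩
  refine memClosureLipc_of_isCompact hD hB hΩ (by fun_prop) ?_ hC
    (fun x hx => not_imp_comm.1 (hbΩ x) (hCb x hx)) hq_off
  refine (X.newt_le_add_newt_sub (fun x => (q x : EReal)) _).trans_lt ?_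
  simp only [hsub]
  exact ENNReal.mul_lt_top X.cc_lt_top (ENNReal.add_lt_top.2 ⟨hq_fin, hwq.trans_le le_top⟩)

lemma memClosureLipc_sub_truncate [ProperSpace P] [IsLocallyFiniteMeasure μ]
    (hAC : X.HasACNorm) (hB : X.HasBoundedIndicators) (hD : X.HasDenseLocallyLipschitz)
    {Ω : Set P} (hΩ : IsOpen Ω) {b : P → ℝ} (hb : Measurable b)
    (hfin : X.newt (fun x => (b x : EReal)) < ⊤) {M : ℝ≥0} (hM : ∀ x, ‖b x‖ₑ ≤ M) {K : Set P}
    (hK : IsCompact K) (hbK : ∀ x ∉ K, b x = 0) (hbΩ : ∀ x ∉ Ω, b x = 0) {e : ℝ≥0}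
    (he : 0 < e) : X.MemClosureLipc Ω fun x => ((b x - truncate e (b x) : ℝ) : EReal) := by
  refine memClosureLipc_of_eq_zero_of_abs_le hAC hB hD hΩ hb hfin hK hbK hbΩ he
    (hb.sub ((measurable_truncate e).comp hb.coe_real_ereal)) (fun x => le_trans ?_ (hM x))
    ((X.newt_sub_truncate_le b e).trans_lt hfin) fun x hx => ?_
  · simpa only [ereal_abs_coe_sub_coe, ereal_abs_coe] using ereal_abs_sub_truncate_le e (b x)
  · rw [sub_eq_zero, eq_comm, ← EReal.coe_eq_coe_iff, coe_truncate_of_abs_le]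
    rwa [ereal_abs_coe, Real.enorm_eq_ofReal_abs, ENNReal.ofReal_le_coe]

lemma memClosureLipc_of_isCompact_of_bounded [ProperSpace P] [IsLocallyFiniteMeasure μ]
    (hAC : X.HasACNorm) (hB : X.HasBoundedIndicators) (hD : X.HasDenseLocallyLipschitz)
    {Ω : Set P} (hΩ : IsOpen Ω) {b : P → ℝ} (hb : Measurable b)
    (hfin : X.newt (fun x => (b x : EReal)) < ⊤) {M : ℝ≥0} (hM : ∀ x, ‖b x‖ₑ ≤ M) {K : Set P}
    (hK : IsCompact K) (hbK : ∀ x ∉ K, b x = 0) (hbΩ : ∀ x ∉ Ω, b x = 0) :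
    X.MemClosureLipc Ω fun x => b x := by
  obtain ⟨e, he, he0, he_lim⟩ := exists_seq_strictAnti_tendsto (0 : ℝ≥0)
  refine memClosureLipc_of_tendsto
    (fun n => memClosureLipc_sub_truncate hAC hB hD hΩ hb hfin hM hK hbK hbΩ (he0 n)) ?_
  have hsub (n : ℕ) (x : P) : (b x : EReal) - (b x - truncate (e n) (b x) : ℝ) =
      truncate (e n) (b x) := by rw [← EReal.coe_sub, _root_.sub_sub_cancel]
  simpa only [hsub] using X.tendsto_newt_truncate hAC hb.coe_real_ereal hfin
    (hB K hK.measurableSet hK.isBounded) (fun x hx => by rw [hbK x hx, EReal.coe_zero])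
    he.antitone he_lim

lemma exists_measurable_newt_sub_mul_le (hB : X.HasBoundedIndicators) {b : P → ℝ}
    (hb : Measurable b) {g : P → ℝ≥0∞} (hg : IsUpperGradient (fun x => (b x : EReal)) g)
    (hg_fin : X.nrmE g < ⊤) {C : Set P} (hC : Bornology.IsBounded C) :
    ∃ η : P → ℝ, Measurable η ∧ (∀ x, ‖η x‖ₑ ≤ 1) ∧ (∀ x ∉ cthickening 1 C, η x = 0) ∧
      X.newt (fun x => (b x : EReal) - (η x * b x : ℝ)) ≤
        X.nrmE (Cᶜ.indicator fun x => ‖b x‖ₑ) +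
          X.cc * X.nrmE (Cᶜ.indicator fun x => g x + ‖b x‖ₑ) := by
  obtain ⟨η, hη, hη01, hη1, hη0, gη, hgη, hgη_fin, hgη1, hgη0⟩ := exists_cutoff hB hC one_pos
  simp only [Real.toNNReal_one, inv_one, ENNReal.coe_one] at hgη1
  have hsub (x : P) : (b x : EReal) - (η x * b x : ℝ) = ((1 - η x) * b x : ℝ) := by
    rw [← EReal.coe_sub, EReal.coe_eq_coe_iff]
    ring
  have hg1 : IsUpperGradient (fun x => ((1 - η x : ℝ) : EReal)) gη :=
    IsUpperGradient.of_abs_sub_le hgη fun x y => by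
      rw [ereal_abs_coe_sub_coe, ereal_abs_coe_sub_coe, _root_.sub_sub_sub_cancel_left,
        enorm_sub_rev]
  have hη_enorm (x : P) : ‖η x‖ₑ ≤ 1 := by
    rw [Real.enorm_of_nonneg (hη01 x).1, ENNReal.ofReal_le_one]
    exact (hη01 x).2
  have hη_enorm' (x : P) : ‖1 - η x‖ₑ ≤ 1 := by
    rw [Real.enorm_of_nonneg (sub_nonneg.2 (hη01 x).2), ENNReal.ofReal_le_one]
    exact sub_le_self _ (hη01 x).1
  refine ⟨η, hη.continuous.measurable, hη_enorm,
    fun x hx => hη0 x fun h => hx (thickening_subset_cthickening _ _ h), ?_⟩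
  simpa only [hsub, mul_one] using X.newt_mul_le_nrmE_indicator_compl (L := 1)
    (hη.continuous.measurable.const_sub 1) hb hg1 hg hgη_fin hg_fin hη_enorm' hgη1
    (fun x hx => by rw [hη1 x hx, _root_.sub_self]) hgη0

lemma memClosureLipc_of_bounded [ProperSpace P] [IsLocallyFiniteMeasure μ]
    (hAC : X.HasACNorm) (hB : X.HasBoundedIndicators) (hD : X.HasDenseLocallyLipschitz)
    {Ω : Set P} (hΩ : IsOpen Ω) {b : P → ℝ} (hb : Measurable b)
    (hfin : X.newt (fun x => (b x : EReal)) < ⊤) {M : ℝ≥0} (hM : ∀ x, ‖b x‖ₑ ≤ M)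
    (hbΩ : ∀ x ∉ Ω, b x = 0) : X.MemClosureLipc Ω fun x => b x := by
  obtain ⟨g, hg, hg_fin⟩ := X.exists_isUpperGradient_nrmE_lt ((X.grad_le_newt _).trans_lt hfin)
  have hb_fin := (X.nrmE_abs_le_newt _).trans_lt hfin
  simp only [ereal_abs_coe] at hb_fin
  have hgb_fin : X.nrmE (fun x => g x + ‖b x‖ₑ) < ⊤ := (X.nrmE_add_le _ _).trans_lt
    (ENNReal.mul_lt_top X.cc_lt_top (ENNReal.add_lt_top.2 ⟨hg_fin, hb_fin⟩))
  set K := CompactExhaustion.choice P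
  have hKc (n : ℕ) : MeasurableSet (K n)ᶜ := (K.isCompact n).measurableSet.compl
  have hKc_anti : Antitone fun n => (K n)ᶜ := fun _ _ h => compl_subset_compl.2 (K.subset h)
  have hKc_null : μ (⋂ n, (K n)ᶜ) = 0 := by
    rw [← compl_iUnion, K.iUnion_eq, compl_univ, measure_empty]
  choose η hη hη1 hη0 hηb using
    fun n => exists_measurable_newt_sub_mul_le hB hb hg hg_fin (K.isCompact n).isBounded
  have hlim := (X.tendsto_nrmE_indicator hAC hb.enorm hb_fin hKc hKc_anti hKc_null).add
    (ENNReal.Tendsto.const_mul (X.tendsto_nrmE_indicator hAC (hg.1.add hb.enorm) hgb_fin hKc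
      hKc_anti hKc_null) (Or.inr X.cc_ne_top))
  rw [mul_zero, add_zero] at hlim
  have hη_fin (n : ℕ) : X.newt (fun x => ((η n x * b x : ℝ) : EReal)) < ⊤ := by
    refine (X.newt_le_add_newt_sub (fun x => (b x : EReal)) _).trans_lt
      (ENNReal.mul_lt_top X.cc_lt_top (ENNReal.add_lt_top.2 ⟨hfin, (hηb n).trans_lt ?_⟩))
    have hind (f : P → ℝ≥0∞) : X.nrmE ((K n)ᶜ.indicator f) ≤ X.nrmE f :=
      X.nrmE_mono (indicator_le_self _ _)
    exact ENNReal.add_lt_top.2 ⟨(hind _).trans_lt hb_fin,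
      ENNReal.mul_lt_top X.cc_lt_top ((hind _).trans_lt hgb_fin)⟩
  refine memClosureLipc_of_tendsto (v := fun n x => ((η n x * b x : ℝ) : EReal)) (fun n => ?_)
    (tendsto_of_tendsto_of_tendsto_of_le_of_le tendsto_const_nhds hlim (fun _ => zero_le) hηb)
  refine memClosureLipc_of_isCompact_of_bounded hAC hB hD hΩ (by fun_prop) (hη_fin n) (M := M)
    (fun x => ?_) (K.isCompact n).cthickening
    (fun x hx => by rw [hη0 n x hx, zero_mul]) fun x hx => by rw [hbΩ x hx, mul_zero]
  rw [enorm_mul]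
  exact (mul_le_of_le_one_left' (hη1 n x)).trans (hM x)

lemma memClosureLipc_of_eq_zero [ProperSpace P] [IsLocallyFiniteMeasure μ]
    (hAC : X.HasACNorm) (hB : X.HasBoundedIndicators) (hD : X.HasDenseLocallyLipschitz)
    {Ω : Set P} (hΩ : IsOpen Ω) {u : P → EReal} (hu : X.memN1 u) (huΩ : ∀ x ∉ Ω, u x = 0) :
    X.MemClosureLipc Ω u := by
  refine memClosureLipc_of_tendsto (v := fun n x => truncate n (u x)) (fun n => ?_)
    (X.tendsto_newt_sub_truncate hAC hu.1 hu.2 Nat.mono_cast tendsto_natCast_atTop_atTop)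
  refine memClosureLipc_of_bounded hAC hB hD hΩ ((measurable_truncate n).comp hu.1)
    ((X.newt_mono (fun x => ?_) fun x y => ?_).trans_lt hu.2)
    (fun x => enorm_truncate_le n (u x)) fun x hx => ?_
  · simpa [ereal_abs_coe, truncate_zero] using enorm_truncate_sub_truncate_le n (u x) 0
  · rw [ereal_abs_coe_sub_coe]
    exact enorm_truncate_sub_truncate_le n (u x) (u y)
  · rw [huΩ x hx, truncate_zero]

end QBFL

/-! ### Limits of functions vanishing outside `Ω` -/

section Limit

lemma sub_indicator_eq_zero_of_tsum_ne_top {α : Type*} {Ω : Set α} {u : α → EReal}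
    {f : ℕ → α → ℝ} {x : α} (hf : ∀ n, x ∉ Ω → f n x = 0)
    (hx : ∑' n, (u x - (f n x : EReal)).abs ≠ ⊤) : u x - Ω.indicator u x = 0 := by
  by_cases hxΩ : x ∈ Ω
  · obtain ⟨p, _, hp, -⟩ :=
      exists_coe_of_ereal_abs_sub_ne_top (ENNReal.ne_top_of_tsum_ne_top hx 0)
    rw [indicator_of_mem hxΩ, hp, ← EReal.coe_sub, _root_.sub_self, EReal.coe_zero]
  · simp only [hf _ hxΩ, EReal.coe_zero, sub_zero] at hx
    rw [indicator_of_notMem hxΩ, sub_zero]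
    by_contra hne
    exact hx (ENNReal.tsum_const_eq_top_of_ne_zero (mt EReal.abs_eq_zero_iff.1 hne))

lemma exists_notMem_of_setLIntegral_ne_top {α : Type*} {N : Set α} {c : ℝ → α} {a b : ℝ}
    (hab : a < b) (h : ∫⁻ t in Icc a b, N.indicator (fun _ => ⊤) (c t) ≠ ⊤) :
    ∃ t ∈ Icc a b, c t ∉ N := by
  by_contra! hN
  refine h ?_
  calc ∫⁻ t in Icc a b, N.indicator (fun _ => ⊤) (c t) = ∫⁻ _ in Icc a b, ⊤ :=
        setLIntegral_congr_fun measurableSet_Icc fun t ht => indicator_of_mem (hN t ht) _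
    _ = ⊤ := by simp [ENNReal.top_mul, hab]

variable {α : Type*} [PseudoMetricSpace α] [MeasurableSpace α]

namespace IsUpperGradient

lemma ereal_abs_le_add_setLIntegral {u : α → EReal} {g : α → ℝ≥0∞} (h : IsUpperGradient u g)
    {c : ℝ → α} (hc : LipschitzWith 1 c) {a b s t : ℝ} (hs : s ∈ Icc a b) (ht : t ∈ Icc a b) :
    (u (c s)).abs ≤ (u (c t)).abs + ∫⁻ r in Icc a b, g (c r) := by
  rcases lt_trichotomy s t with hst | rfl | hts
  · refine (ereal_abs_le_add_abs_sub _ _).trans (add_le_add_right ?_ _)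
    rw [ereal_abs_sub_comm]
    exact (h.ereal_abs_sub_le hc hst).trans (setLIntegral_Icc_le_of_le _ hs.1 ht.2)
  · exact le_self_add
  · exact (ereal_abs_le_add_abs_sub _ _).trans (add_le_add_right
      ((h.ereal_abs_sub_le hc hts).trans (setLIntegral_Icc_le_of_le _ ht.1 hs.2)) _)

variable [BorelSpace α]

lemma tsum_ereal_abs_ne_top {w : ℕ → α → EReal} {g : ℕ → α → ℝ≥0∞}
    (h : ∀ n, IsUpperGradient (w n) (g n)) {c : ℝ → α} (hc : LipschitzWith 1 c) {a b s t : ℝ}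
    (hs : s ∈ Icc a b) (ht : t ∈ Icc a b) (hfin : ∫⁻ r in Icc a b, ∑' n, g n (c r) ≠ ⊤)
    (hw : ∑' n, (w n (c t)).abs ≠ ⊤) : ∑' n, (w n (c s)).abs ≠ ⊤ := by
  rw [lintegral_tsum fun n => ((h n).measurable_comp hc).aemeasurable] at hfin
  refine ne_top_of_le_ne_top (ENNReal.add_ne_top.2 ⟨hw, hfin⟩) ?_
  rw [← ENNReal.tsum_add]
  exact ENNReal.tsum_le_tsum fun n => (h n).ereal_abs_le_add_setLIntegral hc hs ht

/-- A curve of finite gradient integral along which the sum of the `|w n|` is infinite at one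
point lies in the exceptional set entirely, so the indicator makes its integral infinite. -/
lemma tsum_add_indicator_top {w : ℕ → α → EReal} {g : ℕ → α → ℝ≥0∞} {z : α → EReal}
    (hw : ∀ n, Measurable (w n)) (h : ∀ n, IsUpperGradient (w n) (g n))
    (hz : ∀ x, ∑' n, (w n x).abs ≠ ⊤ → z x = 0) :
    IsUpperGradient z
      fun x => ∑' n, g n x + {x | ∑' n, (w n x).abs = ⊤}.indicator (fun _ => ⊤) x := by
  have hN : MeasurableSet {x | ∑' n, (w n x).abs = ⊤} :=
    measurableSet_eq_fun (Measurable.tsum fun n => measurable_ereal_abs.comp (hw n))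
      measurable_const
  refine isUpperGradient_iff.2 ⟨(Measurable.tsum fun n => (h n).1).add
    (measurable_const.indicator hN), fun c hc a b hab => ?_⟩
  by_cases htop : ∫⁻ t in Icc a b, (∑' n, g n (c t) +
      {x | ∑' n, (w n x).abs = ⊤}.indicator (fun _ => ⊤) (c t)) = ⊤
  · exact le_top.trans_eq htop.symm
  have hfin : ∫⁻ t in Icc a b, ∑' n, g n (c t) ≠ ⊤ :=
    ne_top_of_le_ne_top htop (lintegral_mono fun _ => le_self_add)
  obtain ⟨t, ht, htN⟩ := exists_notMem_of_setLIntegral_ne_top hab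
    (ne_top_of_le_ne_top htop (lintegral_mono fun _ => le_add_self))
  have hzc : ∀ s ∈ Icc a b, z (c s) = 0 := fun s hs =>
    hz _ (tsum_ereal_abs_ne_top h hc hs ht hfin htN)
  simp [hzc a ⟨le_rfl, hab.le⟩, hzc b ⟨hab.le, le_rfl⟩]

end IsUpperGradient

end Limit

namespace QBFL

variable [BorelSpace P]

lemma newt_le_tsum_of_eq_zero (X : QBFL P μ) {w : ℕ → P → EReal} {g : ℕ → P → ℝ≥0∞}
    {z : P → EReal} (hw : ∀ n, Measurable (w n)) (hg : ∀ n, IsUpperGradient (w n) (g n))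
    (hsum : X.nrmE (fun x => ∑' n, (w n x).abs) < ⊤)
    (hz : ∀ x, ∑' n, (w n x).abs ≠ ⊤ → z x = 0) :
    X.newt z ≤ ∑' n, X.cc ^ (n + 1) * X.nrmE (g n) := by
  have hfin : ∀ᵐ x ∂μ, ∑' n, (w n x).abs < ⊤ := X.ae_lt_top_of_nrmE_lt_top
    (Measurable.tsum fun n => measurable_ereal_abs.comp (hw n)) hsum
  have hz0 : X.nrmE (fun x => (z x).abs) ≤ 0 := by
    rw [← X.nrmE_zero]
    refine X.nrmE_mono_ae ?_
    filter_upwards [hfin] with x hx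
    simp [hz x hx.ne]
  calc X.newt z ≤ 0 + X.nrmE (fun x => ∑' n, g n x +
        {x | ∑' n, (w n x).abs = ⊤}.indicator (fun _ => ⊤) x) := by
        rw [newt_eq_nrmE_add_grad]
        exact add_le_add hz0 (X.grad_le_nrmE (IsUpperGradient.tsum_add_indicator_top hw hg hz))
    _ ≤ X.nrmE fun x => ∑' n, g n x := by
        rw [zero_add]
        refine X.nrmE_mono_ae ?_
        filter_upwards [hfin] with x hx
        rw [indicator_of_notMem (show x ∉ {x | ∑' n, (w n x).abs = ⊤} from hx.ne), add_zero]
    _ ≤ _ := X.nrmE_tsum_le g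

variable {X : QBFL P μ} {Ω : Set P} {u : P → EReal}

lemma newt_sub_indicator_eq_zero (hu : Measurable u) (h : X.MemClosureLipc Ω u) :
    X.newt (fun x => u x - Ω.indicator u x) = 0 := by
  refine nonpos_iff_eq_zero.1 (le_of_forall_gt fun ε hε => ?_)
  obtain ⟨d, hd, hdε⟩ := X.exists_pos_weights (lt_min hε one_pos).ne'
  choose f hf _ hfΩ hfd using fun n => h (d n) (ENNReal.coe_pos.2 (hd n))
  choose g hg hgd using fun n =>
    X.exists_isUpperGradient_nrmE_lt ((X.grad_le_newt _).trans_lt (hfd n))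
  have hsum : X.nrmE (fun x => ∑' n, (u x - (f n x : EReal)).abs) < ⊤ :=
    calc _ ≤ ∑' n, X.cc ^ (n + 1) * X.nrmE (fun x => (u x - (f n x : EReal)).abs) :=
          X.nrmE_tsum_le _
      _ ≤ ∑' n, X.cc ^ (n + 1) * d n := by
          gcongr with n
          exact (X.nrmE_abs_le_newt _).trans (hfd n).le
      _ < ⊤ := hdε.trans ((min_le_right _ _).trans_lt one_lt_top)
  have hf_meas : ∀ n, Measurable fun x => u x - (f n x : EReal) := fun n => by
    obtain ⟨K, hK⟩ := hf n
    exact hu.sub hK.continuous.measurable.coe_real_ereal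
  calc X.newt (fun x => u x - Ω.indicator u x) ≤ ∑' n, X.cc ^ (n + 1) * X.nrmE (g n) :=
        X.newt_le_tsum_of_eq_zero hf_meas hg hsum fun x => sub_indicator_eq_zero_of_tsum_ne_top
          fun n hx => image_eq_zero_of_notMem_tsupport (mt (@hfΩ n x) hx)
    _ ≤ ∑' n, X.cc ^ (n + 1) * d n := by
        gcongr with n
        exact (hgd n).le
    _ < ε := hdε.trans_le (min_le_left _ _)

lemma memN1_indicator (hΩ : MeasurableSet Ω) (hu : X.memN1 u)
    (h : X.newt (fun x => u x - Ω.indicator u x) = 0) : X.memN1 (Ω.indicator u) := by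
  refine ⟨hu.1.indicator hΩ, (X.newt_le_add_newt_sub u _).trans_lt ?_⟩
  rw [h, add_zero]
  exact ENNReal.mul_lt_top X.cc_lt_top hu.2

lemma hasBoundedIndicators_of_forall_nrm_lt_top [ProperSpace P] [IsLocallyFiniteMeasure μ]
    (h : ∀ E : Set P, MeasurableSet E → μ E < ⊤ → X.nrm (E.indicator 1) < ⊤) :
    X.HasBoundedIndicators := fun A hA hAb =>
  (X.nrmE_indicator_one A).trans_lt (h A hA hAb.measure_lt_top)

end QBFL

theorem lipc_closure_eq_N0_general [BorelSpace P] [ProperSpace P] [IsLocallyFiniteMeasure μ]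
    {X : QBFL P μ} (hAC : X.HasACNorm) (hB : X.HasBoundedIndicators)
    (hD : X.HasDenseLocallyLipschitz) {Ω : Set P} (hΩ : IsOpen Ω) {u : P → EReal}
    (hu : X.memN1 u) :
    X.MemClosureLipc Ω u ↔
      ∃ v, X.memN1 v ∧ (∀ x ∉ Ω, v x = 0) ∧ X.newt (fun x => u x - v x) = 0 := by
  constructor
  · intro h
    have hz := QBFL.newt_sub_indicator_eq_zero hu.1 h
    exact ⟨Ω.indicator u, QBFL.memN1_indicator hΩ.measurableSet hu hz,
      fun x hx => indicator_of_notMem hx u, hz⟩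
  · rintro ⟨v, hv, hvΩ, huv⟩
    exact QBFL.memClosureLipc_of_forall_exists fun ε hε =>
      ⟨v, QBFL.memClosureLipc_of_eq_zero hAC hB hD hΩ hv hvΩ, huv.trans_lt hε⟩

/-- Let `P` be proper, `Ω ⊆ P` open, `‖·‖_X` absolutely continuous and
containing characteristic functions of sets of finite measure. If locally Lipschitz functions
are dense in `N¹X`, then the closure of `Lip_c(Ω)` in `N¹X` is `{u ∈ N¹X : u = 0 on P ∖ Ω}`
(where, due to `‖·‖_{N¹X}` being merely a quasi-seminorm, membership of `u` in the right-hand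
side is understood up to a function `v` with `‖u - v‖_{N¹X} = 0`). -/
theorem lipc_closure_eq_N0
    {P : Type*} [MetricSpace P] [MeasurableSpace P] [BorelSpace P] [ProperSpace P]
    (μ : MeasureTheory.Measure P) [SigmaFinite μ]
    (hball : ∀ (x : P) (r : ℝ), 0 < r → 0 < μ (Metric.ball x r) ∧ μ (Metric.ball x r) < ⊤)
    (X : QBFL P μ) (hAC : X.HasACNorm)
    (hsimple : ∀ E : Set P, MeasurableSet E → μ E < ⊤ → X.nrm (E.indicator 1) < ⊤)
    (hdens : ∀ u : P → EReal, X.memN1 u → ∀ ε : ℝ≥0∞, 0 < ε →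
      ∃ f : P → ℝ, LocallyLipschitz f ∧ X.newt (fun x => u x - (f x : EReal)) < ε)
    (Ω : Set P) (hΩ : IsOpen Ω) :
    ∀ u : P → EReal, X.memN1 u →
      ((∀ ε : ℝ≥0∞, 0 < ε →
          ∃ f : P → ℝ, (∃ K : ℝ≥0, LipschitzWith K f) ∧ HasCompactSupport f ∧
            tsupport f ⊆ Ω ∧ X.newt (fun x => u x - (f x : EReal)) < ε) ↔
        (∃ v : P → EReal, X.memN1 v ∧ (∀ x ∉ Ω, v x = 0) ∧
          X.newt (fun x => u x - v x) = 0)) := by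
  have : IsLocallyFiniteMeasure μ :=
    ⟨fun x => ⟨ball x 1, ball_mem_nhds x one_pos, (hball x 1 one_pos).2⟩⟩
  exact fun u hu => lipc_closure_eq_N0_general hAC
    (QBFL.hasBoundedIndicators_of_forall_nrm_lt_top hsimple) hdens hΩ hu

end
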